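/- arXiv:2305.04305 — 8 statements merged into one kernel-verified Lean document; each statement's English description precedes it below -/
import Mathlib

section
/- The online size Ramsey number of the 4-cycle versus the path on six vertices equals 11, that is, ř(C₄,P₆) = 11. -/
open SimpleGraph

/-- The set `S` of edges of the infinite complete graph on `ℕ` contains a copy of
the graph `G`: there is an injective map of the vertices of `G` into `ℕ` sending
every edge of `G` into `S`. -/
def HasCopy {V : Type*} (G : SimpleGraph V) (S : Set (Sym2 ℕ)) : Prop :=
  ∃ f : V → ℕ, Function.Injective f ∧ ∀ a b, G.Adj a b → s(f a, f b) ∈ S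

/-- `BuilderWinsIn G H R B r` means: in the online Ramsey game with targets a red copy
of `G` and a blue copy of `H`, from the position in which the edges in `R` have been
colored red and the edges in `B` have been colored blue, Builder has a strategy that
guarantees, against every Painter strategy, that within at most `r` further rounds the
colored edges contain a red copy of `G` or a blue copy of `H`.  (In each round Builder
chooses a previously unchosen non-loop edge of the infinite complete graph on `ℕ`, and
Painter immediately colors it red or blue; so Builder wins within `r + 1` rounds iff he
has already won, or he can choose an edge such that whichever color Painter gives it,
he can win within `r` further rounds.) -/
def BuilderWinsIn {V W : Type*} (G : SimpleGraph V) (H : SimpleGraph W) :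
    Set (Sym2 ℕ) → Set (Sym2 ℕ) → ℕ → Prop
  | R, B, 0 => HasCopy G R ∨ HasCopy H B
  | R, B, (r + 1) => HasCopy G R ∨ HasCopy H B ∨
      ∃ e : Sym2 ℕ, ¬ e.IsDiag ∧ e ∉ R ∧ e ∉ B ∧
        BuilderWinsIn G H (insert e R) B r ∧ BuilderWinsIn G H R (insert e B) r

/-- The online size Ramsey number `ř(G, H)`: the least `t` such that, starting from the
empty position, Builder can force a red copy of `G` or a blue copy of `H` within at
most `t` rounds. -/
noncomputable def onlineRamsey {V W : Type*} (G : SimpleGraph V) (H : SimpleGraph W) : ℕ :=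
  sInf {t | BuilderWinsIn G H ∅ ∅ t}

namespace C4P6

/-! ### Upper bound: an explicit Builder strategy -/

/-- Adjacency in a list of edges. -/
def adj (l : List (ℕ × ℕ)) (a b : ℕ) : Bool :=
  l.any fun p => (p.1 == a && p.2 == b) || (p.1 == b && p.2 == a)

/-- The set of edges given by a list. -/
def toSet (l : List (ℕ × ℕ)) : Set (Sym2 ℕ) := {e | ∃ p ∈ l, s(p.1, p.2) = e}

theorem adj_iff (l : List (ℕ × ℕ)) (a b : ℕ) : adj l a b = true ↔ s(a, b) ∈ toSet l := by
  simp only [adj, toSet, List.any_eq_true, Bool.or_eq_true, Bool.and_eq_true, beq_iff_eq,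
    Set.mem_ofPred_eq, Sym2.eq_iff]

theorem toSet_cons (p : ℕ × ℕ) (l : List (ℕ × ℕ)) :
    toSet (p :: l) = insert s(p.1, p.2) (toSet l) := by
  ext e
  simp [toSet, eq_comm]

/-- Is there a 4-cycle on the vertices `0, …, 6`? -/
def c4 (l : List (ℕ × ℕ)) : Bool :=
  (List.range 7).any fun a => (List.range 7).any fun b => adj l a b &&
  (List.range 7).any fun c => adj l b c && (c != a && (c != b && (a != b &&
  (List.range 7).any fun d => adj l c d && (adj l d a && (d != a && (d != b && d != c))))))

/-- Is there a path on six of the vertices `0, …, 6`? -/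
def p6 (l : List (ℕ × ℕ)) : Bool :=
  (List.range 7).any fun a => (List.range 7).any fun b => adj l a b && (b != a &&
  (List.range 7).any fun c => adj l b c && (c != a && (c != b &&
  (List.range 7).any fun d => adj l c d && (d != a && (d != b && (d != c &&
  (List.range 7).any fun e => adj l d e && (e != a && (e != b && (e != c && (e != d &&
  (List.range 7).any fun f => adj l e f &&
    (f != a && (f != b && (f != c && (f != d && f != e))))))))))))))

theorem c4_sound {l : List (ℕ × ℕ)} (h : c4 l = true) : HasCopy (cycleGraph 4) (toSet l) := by
  simp only [c4, List.any_eq_true, Bool.and_eq_true, bne_iff_ne, adj_iff] at h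
  obtain ⟨a, -, b, -, hab, c, -, hbc, h1, h2, h3, d, -, hcd, hda, h4, h5, h6⟩ := h
  refine ⟨![a, b, c, d], ?_, ?_⟩
  · intro i j hij
    fin_cases i <;> fin_cases j <;> simp_all
  · intro i j hij
    rw [cycleGraph_adj] at hij
    fin_cases i <;> fin_cases j <;> first | (exfalso; revert hij; decide) | skip
    all_goals first | assumption | (rw [Sym2.eq_swap]; assumption)

theorem p6_sound {l : List (ℕ × ℕ)} (h : p6 l = true) : HasCopy (pathGraph 6) (toSet l) := by
  simp only [p6, List.any_eq_true, Bool.and_eq_true, bne_iff_ne, adj_iff] at h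
  obtain ⟨a, -, b, -, hab, h1, c, -, hbc, h2, h3, d, -, hcd, h4, h5, h6, e, -, hde,
    h7, h8, h9, h10, f, -, hef, h11, h12, h13, h14, h15⟩ := h
  refine ⟨![a, b, c, d, e, f], ?_, ?_⟩
  · intro i j hij
    fin_cases i <;> fin_cases j <;> simp_all
  · intro i j hij
    rw [pathGraph_adj] at hij
    fin_cases i <;> fin_cases j <;> first | (exfalso; revert hij; decide) | skip
    all_goals first | assumption | (rw [Sym2.eq_swap]; assumption)

/-- Checks a Builder strategy, given as the list (in preorder, red branch first) of the moves
made at the positions which are not yet won. Returns the unused part of the list. -/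
def chk : ℕ → List (ℕ × ℕ) → List (ℕ × ℕ) → List (ℕ × ℕ) → Option (List (ℕ × ℕ))
  | 0, c, R, B => if c4 R || p6 B then some c else none
  | k + 1, c, R, B => if c4 R || p6 B then some c else
    match c with
    | [] => none
    | p :: c => if p.1 != p.2 && (!adj R p.1 p.2 && !adj B p.1 p.2) then
        match chk k c (p :: R) B with
        | none => none
        | some c' => chk k c' R (p :: B)
      else none

theorem chk_sound (k : ℕ) : ∀ (c R B c' : List (ℕ × ℕ)), chk k c R B = some c' →
    BuilderWinsIn (cycleGraph 4) (pathGraph 6) (toSet R) (toSet B) k := by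
  induction k with
  | zero =>
    intro c R B c' h
    rw [chk] at h
    split_ifs at h with h1
    rw [Bool.or_eq_true] at h1
    exact h1.imp c4_sound p6_sound
  | succ k ih =>
    intro c R B c' h
    rw [chk.eq_def] at h
    simp only at h
    split_ifs at h with h1
    · rw [Bool.or_eq_true] at h1
      rcases h1 with h1 | h1
      · exact Or.inl (c4_sound h1)
      · exact Or.inr (Or.inl (p6_sound h1))
    · cases c with
      | nil => simp at h
      | cons p c =>
        simp only at h
        split_ifs at h with h2
        simp only [Bool.and_eq_true, bne_iff_ne, Bool.not_eq_true', ← Bool.not_eq_true,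
          adj_iff] at h2
        cases h3 : chk k c (p :: R) B with
        | none => simp [h3] at h
        | some c1 =>
          simp only [h3] at h
          refine Or.inr (Or.inr ⟨s(p.1, p.2), ?_, h2.2.1, h2.2.2, ?_, ?_⟩)
          · simpa using h2.1
          · rw [← toSet_cons]; exact ih _ _ _ _ h3
          · rw [← toSet_cons]; exact ih _ _ _ _ h

/-- The strategy of Builder. -/
def strategy : List (ℕ × ℕ) :=
  [
   (0,1), (0,2), (1,3), (2,3), (0,4), (1,2), (0,3), (1,4), (2,4), (0,5), (1,5), (3,4),
   (1,5), (4,5), (0,3), (0,5), (2,5), (0,5), (4,6), (5,6), (1,5), (2,5), (3,4), (4,5),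
   (0,6), (3,6), (0,6), (5,6), (0,5), (3,5), (1,4), (2,4), (1,2), (2,4), (3,4), (2,4),
   (0,5), (4,5), (2,5), (0,4), (1,2), (0,3), (3,5), (1,4), (0,3), (2,6), (3,6), (1,4),
   (0,6), (4,6), (0,3), (3,5), (5,6), (3,5), (3,6), (4,5), (4,6), (1,5), (2,5), (0,3),
   (3,5), (0,4), (1,6), (4,6), (0,4), (0,5), (1,4), (0,3), (2,6), (3,6), (2,5), (4,5),
   (4,6), (3,4), (0,5), (4,5), (1,4), (0,4), (2,5), (4,5), (1,3), (3,4), (0,4), (1,5),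
   (4,5), (3,5), (1,6), (3,6), (5,6), (0,5), (1,4), (1,2), (2,6), (3,6), (1,6), (4,6),
   (1,2), (2,5), (5,6), (2,5), (2,6), (4,5), (4,6), (0,5), (3,5), (1,2), (2,5), (0,6),
   (1,4), (4,6), (0,4), (1,4), (1,5), (1,2), (2,6), (0,6), (3,6), (1,5), (5,6), (3,5),
   (3,6), (4,5), (4,6), (1,4), (3,5), (4,5), (0,4), (4,5), (1,5), (0,6), (5,6), (0,3),
   (2,3), (2,6), (2,3), (2,5), (3,6), (5,6), (1,2), (2,4), (0,3), (1,5), (3,5), (0,5),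
   (3,4), (3,5), (1,2), (1,4), (2,3), (3,4), (2,5), (0,5), (4,5), (4,5), (0,5), (2,5),
   (2,5), (2,6), (3,5), (3,6), (3,5), (3,6), (4,5), (4,6), (2,3), (2,4), (3,5), (4,5),
   (0,2), (3,4), (0,3), (2,5), (1,2), (1,4), (0,5), (1,2), (1,6), (3,6), (1,3), (1,4),
   (2,6), (5,6), (2,5), (3,4), (4,6), (3,6), (0,2), (0,6), (1,2), (0,4), (1,4), (1,6),
   (1,5), (1,6), (2,5), (2,6), (0,3), (0,4), (1,3), (0,5), (1,5), (1,4), (1,4), (1,6),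
   (4,5), (5,6), (2,5), (0,3), (0,5), (3,4), (4,5), (1,3), (1,6), (2,6), (1,2), (1,3),
   (3,5), (3,4), (4,5), (1,2), (1,5), (3,5), (1,5), (1,6), (2,6), (3,4), (4,6), (2,6),
   (3,5), (5,6), (0,4), (0,5), (0,3), (0,6), (0,5), (0,6), (1,5), (1,6), (0,3), (0,5),
   (1,3), (1,5), (0,4), (0,5), (1,4), (1,5), (2,4), (2,5), (0,6), (3,4), (3,6), (0,3),
   (3,5), (4,5), (2,4), (2,5), (0,3), (3,4), (4,5), (0,6), (3,5), (3,6), (1,4), (1,6),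
   (0,6), (4,5), (5,6), (1,2), (2,5), (2,4), (2,6), (2,5), (2,6), (3,5), (3,6), (2,4),
   (2,5), (3,4), (3,5), (1,2), (1,3), (2,5), (3,5), (1,5), (2,4), (4,5), (1,5), (3,4),
   (4,5), (2,5), (2,6), (4,5), (4,6), (3,5), (3,6), (4,5), (4,6)]

theorem strategy_ok : chk 11 strategy [] [] = some [] := by decide +kernel

theorem upper : BuilderWinsIn (cycleGraph 4) (pathGraph 6) ∅ ∅ 11 := by
  have h := chk_sound _ _ _ _ _ strategy_ok
  have h0 : toSet [] = ∅ := by ext; simp [toSet]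
  rwa [h0] at h

/-! ### Lower bound: Painter colors red unless this closes a red 4-cycle -/

/-- `u` and `v` are joined by a path with three edges from `F`. -/
def Joined {V : Type*} (F : Finset (Sym2 V)) (u v : V) : Prop :=
  ∃ a b, (a ≠ u ∧ a ≠ v ∧ b ≠ u ∧ b ≠ v ∧ a ≠ b) ∧ s(u, a) ∈ F ∧ s(a, b) ∈ F ∧ s(b, v) ∈ F

/-- The search statement: whenever each listed pair is joined in a superset of `E`,
there are more than five edges. -/
def Q : List (Fin 6 × Fin 6) → Finset (Sym2 (Fin 6)) → Prop
  | [], E => 5 < E.card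
  | p :: ps, E => 5 < E.card ∨ ∀ a b : Fin 6,
      (a ≠ p.1 ∧ a ≠ p.2 ∧ b ≠ p.1 ∧ b ≠ p.2 ∧ a ≠ b) →
      Q ps (insert s(p.1, a) (insert s(a, b) (insert s(b, p.2) E)))

instance decQ : ∀ ps E, Decidable (Q ps E)
  | [], E => inferInstanceAs (Decidable (5 < E.card))
  | p :: ps, E =>
    have := fun E' => decQ ps E'
    inferInstanceAs (Decidable (5 < E.card ∨ ∀ a b : Fin 6,
      (a ≠ p.1 ∧ a ≠ p.2 ∧ b ≠ p.1 ∧ b ≠ p.2 ∧ a ≠ b) →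
      Q ps (insert s(p.1, a) (insert s(a, b) (insert s(b, p.2) E)))))

theorem Q_sound (F : Finset (Sym2 (Fin 6))) (hF : F.card ≤ 5) : ∀ ps E, Q ps E → E ⊆ F →
    (∀ p ∈ ps, Joined F p.1 p.2) → False := by
  intro ps
  induction ps with
  | nil =>
    intro E h hE _
    have := Finset.card_le_card hE
    simp only [Q] at h
    omega
  | cons p ps ih =>
    intro E h hE hp
    rcases h with h | h
    · have := Finset.card_le_card hE
      omega
    · obtain ⟨a, b, hd, h1, h2, h3⟩ := hp p (by simp)
      refine ih _ (h a b hd) ?_ (fun q hq => hp q (by simp [hq]))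
      intro e he
      simp only [Finset.mem_insert] at he
      rcases he with rfl | rfl | rfl | he
      · exact h1
      · exact h2
      · exact h3
      · exact hE he

theorem Q_true : Q [(0, 1), (1, 2), (2, 3), (3, 4), (4, 5)] ∅ := by decide +kernel

/-- A walk with edges in `R` visits at most `R.card + 1` vertices. -/
theorem walk_card (R : Finset (Sym2 ℕ)) (l : List ℕ)
    (h : l.IsChain fun u v => s(u, v) ∈ R) : l.toFinset.card ≤ R.card + 1 := by
  suffices H : ∃ E ⊆ R, (∀ e ∈ E, ∀ v ∈ e, v ∈ l) ∧ l.toFinset.card ≤ E.card + 1 by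
    obtain ⟨E, hE, -, h2⟩ := H
    have := Finset.card_le_card hE
    omega
  induction l with
  | nil => exact ⟨∅, by simp, by simp, by simp⟩
  | cons u l ih =>
    cases l with
    | nil => exact ⟨∅, by simp, by simp, by simp⟩
    | cons v l =>
      rw [List.isChain_cons_cons] at h
      obtain ⟨E, hE, h1, h2⟩ := ih h.2
      by_cases hu : u ∈ v :: l
      · refine ⟨E, hE, fun e he w hw => List.mem_cons_of_mem _ (h1 e he w hw), ?_⟩
        rw [List.toFinset_cons, Finset.insert_eq_of_mem (by simpa using hu)]
        exact h2
      · refine ⟨insert s(u, v) E, ?_, ?_, ?_⟩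
        · intro e he
          rcases Finset.mem_insert.1 he with rfl | he
          · exact h.1
          · exact hE he
        · intro e he w hw
          rcases Finset.mem_insert.1 he with rfl | he
          · rcases Sym2.mem_iff.1 hw with rfl | rfl <;> simp
          · exact List.mem_cons_of_mem _ (h1 e he w hw)
        · have hn : s(u, v) ∉ E := fun hc => hu (h1 _ hc u (Sym2.mem_mk_left u v))
          rw [Finset.card_insert_of_notMem hn, List.toFinset_cons,
            Finset.card_insert_of_notMem (by simpa using hu)]
          omega

/-- Five edges cannot join the six consecutive vertices of a path. -/
theorem core (R : Finset (Sym2 ℕ)) (hR : R.card ≤ 5) (x : Fin 6 → ℕ)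
    (hx : Function.Injective x) (h : ∀ i : Fin 5, Joined R (x i.castSucc) (x i.succ)) : False := by
  have hj := h
  choose a b hd h1 h2 h3 using h
  have hw := walk_card R [x 0, a 0, b 0, x 1, a 1, b 1, x 2, a 2, b 2, x 3, a 3, b 3,
    x 4, a 4, b 4, x 5] (by
      simp only [List.isChain_cons_cons, List.isChain_singleton, and_true]
      exact ⟨h1 0, h2 0, h3 0, h1 1, h2 1, h3 1, h1 2, h2 2, h3 2, h1 3, h2 3, h3 3,
        h1 4, h2 4, h3 4⟩)
  set L := [x 0, a 0, b 0, x 1, a 1, b 1, x 2, a 2, b 2, x 3, a 3, b 3,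
    x 4, a 4, b 4, x 5] with hL
  have hsub : Finset.univ.image x ⊆ L.toFinset := by
    intro v hv
    obtain ⟨i, -, rfl⟩ := Finset.mem_image.1 hv
    fin_cases i <;> simp [hL]
  have hc : (Finset.univ.image x).card = 6 := by
    rw [Finset.card_image_of_injective _ hx]; simp
  have heq := Finset.eq_of_subset_of_card_le hsub (by omega)
  have ha : ∀ i, ∃ j, x j = a i := by
    intro i
    have : a i ∈ L.toFinset := by fin_cases i <;> simp [hL]
    rw [← heq] at this
    simpa using this
  have hb : ∀ i, ∃ j, x j = b i := by
    intro i
    have : b i ∈ L.toFinset := by fin_cases i <;> simp [hL]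
    rw [← heq] at this
    simpa using this
  let F : Finset (Sym2 (Fin 6)) := Finset.univ.filter fun e => Sym2.map x e ∈ R
  have hF : F.card ≤ 5 := by
    refine le_trans (Finset.card_le_card_of_injOn (Sym2.map x) ?_ ?_) hR
    · intro e he
      simpa [F] using he
    · exact (Sym2.map.injective hx).injOn
  have hJ : ∀ i : Fin 5, Joined F i.castSucc i.succ := by
    intro i
    obtain ⟨α, hα⟩ := ha i
    obtain ⟨β, hβ⟩ := hb i
    have hd' := hd i
    have e1 := h1 i
    have e2 := h2 i
    have e3 := h3 i
    rw [← hα, ← hβ] at hd' e2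
    rw [← hα] at e1
    rw [← hβ] at e3
    simp only [hx.ne_iff] at hd'
    exact ⟨α, β, hd', by simpa [F] using e1, by simpa [F] using e2, by simpa [F] using e3⟩
  refine Q_sound F hF _ _ Q_true (by simp) ?_
  intro p hp
  simp only [List.mem_cons, List.not_mem_nil, or_false] at hp
  rcases hp with rfl | rfl | rfl | rfl | rfl
  · exact hJ 0
  · exact hJ 1
  · exact hJ 2
  · exact hJ 3
  · exact hJ 4

/-- The invariant of Painter implies that there is no blue `P₆`. -/
theorem no_blue (R B : Finset (Sym2 ℕ)) (hc : R.card + B.card ≤ 10)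
    (hB : ∀ u v, s(u, v) ∈ B → Joined R u v) :
    ¬ HasCopy (pathGraph 6) (B : Set (Sym2 ℕ)) := by
  rintro ⟨x, hx, hadj⟩
  have hm : ∀ i : Fin 5, s(x i.castSucc, x i.succ) ∈ B := by
    intro i
    have := hadj i.castSucc i.succ (by rw [pathGraph_adj]; left; simp)
    simpa using this
  have h5 : (Finset.univ : Finset (Fin 5)).card ≤ B.card := by
    refine Finset.card_le_card_of_injOn (fun i => s(x i.castSucc, x i.succ))
      (fun i _ => hm i) ?_
    intro i _ j _ hij
    simp only [Sym2.eq_iff, hx.eq_iff] at hij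
    revert hij
    revert i j
    decide
  simp only [Finset.card_univ, Fintype.card_fin] at h5
  exact core R (by omega) x hx fun i => hB _ _ (hm i)

theorem joined_of_cycle (R : Finset (Sym2 ℕ)) (e : Sym2 ℕ)
    (hR : ¬ HasCopy (cycleGraph 4) (R : Set (Sym2 ℕ)))
    (h : HasCopy (cycleGraph 4) (insert e (R : Set (Sym2 ℕ)))) :
    ∀ u v, s(u, v) = e → Joined R u v := by
  obtain ⟨f, hf, hadj⟩ := h
  have key : ∃ i : Fin 4, e = s(f i, f (i + 1)) := by
    by_contra hcon
    push Not at hcon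
    refine hR ⟨f, hf, fun a b hab => ?_⟩
    rcases hadj a b hab with h1 | h1
    · exfalso
      rw [cycleGraph_adj] at hab
      rcases hab with hab | hab
      · apply hcon b
        rw [← h1, Sym2.eq_swap, ← hab]
        simp
      · apply hcon a
        rw [← h1, ← hab]
        simp
    · exact h1
  obtain ⟨i, hi⟩ := key
  have hE : ∀ j : Fin 4, j ≠ i → s(f j, f (j + 1)) ∈ R := by
    intro j hj
    rcases hadj j (j + 1) (by rw [cycleGraph_adj]; right; simp) with h1 | h1
    · exfalso
      rw [hi] at h1
      simp only [Sym2.eq_iff, hf.eq_iff] at h1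
      revert h1 hj
      clear hi
      revert i j
      decide
    · simpa using h1
  have q1 := hE (i + 1) (by clear * -; revert i; decide)
  have q2 := hE (i + 2) (by clear * -; revert i; decide)
  have q3 := hE (i + 3) (by clear * -; revert i; decide)
  have r1 : i + 1 + 1 = i + 2 := by clear * -; revert i; decide
  have r2 : i + 2 + 1 = i + 3 := by clear * -; revert i; decide
  have r3 : i + 3 + 1 = i := by clear * -; revert i; decide
  rw [r1] at q1
  rw [r2] at q2
  rw [r3] at q3
  have n1 : i + 2 ≠ i := by clear * -; revert i; decide
  have n2 : i + 2 ≠ i + 1 := by clear * -; revert i; decide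
  have n3 : i + 3 ≠ i := by clear * -; revert i; decide
  have n4 : i + 3 ≠ i + 1 := by clear * -; revert i; decide
  have n5 : i + 2 ≠ i + 3 := by clear * -; revert i; decide
  intro u v huv
  rw [hi, Sym2.eq_iff] at huv
  rcases huv with ⟨rfl, rfl⟩ | ⟨rfl, rfl⟩
  · refine ⟨f (i + 3), f (i + 2), ⟨hf.ne n3, hf.ne n4, hf.ne n1, hf.ne n2, hf.ne n5.symm⟩,
      ?_, ?_, ?_⟩
    · rw [Sym2.eq_swap]; exact q3
    · rw [Sym2.eq_swap]; exact q2
    · rw [Sym2.eq_swap]; exact q1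
  · exact ⟨f (i + 2), f (i + 3), ⟨hf.ne n2, hf.ne n1, hf.ne n4, hf.ne n3, hf.ne n5⟩, q1, q2, q3⟩

theorem Joined.mono {R R' : Finset (Sym2 ℕ)} (h : R ⊆ R') {u v : ℕ} (hj : Joined R u v) :
    Joined R' u v := by
  obtain ⟨a, b, hd, h1, h2, h3⟩ := hj
  exact ⟨a, b, hd, h h1, h h2, h h3⟩

theorem painter (r : ℕ) : ∀ (R B : Finset (Sym2 ℕ)), R.card + B.card + r ≤ 10 →
    ¬ HasCopy (cycleGraph 4) (R : Set (Sym2 ℕ)) →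
    (∀ u v, s(u, v) ∈ B → Joined R u v) →
    ¬ BuilderWinsIn (cycleGraph 4) (pathGraph 6) (R : Set (Sym2 ℕ)) (B : Set (Sym2 ℕ)) r := by
  induction r with
  | zero =>
    intro R B hc hR hB h
    rcases h with h | h
    · exact hR h
    · exact no_blue R B (by omega) hB h
  | succ r ih =>
    intro R B hc hR hB h
    rcases h with h | h | ⟨e, -, -, -, h1, h2⟩
    · exact hR h
    · exact no_blue R B (by omega) hB h
    · by_cases hcyc : HasCopy (cycleGraph 4) (insert e (R : Set (Sym2 ℕ)))
      · have hj := joined_of_cycle R e hR hcyc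
        have hcard := Finset.card_insert_le e B
        rw [← Finset.coe_insert] at h2
        refine ih R (insert e B) (by omega) hR ?_ h2
        intro u v huv
        rcases Finset.mem_insert.1 huv with huv | huv
        · exact hj u v huv
        · exact hB u v huv
      · have hcard := Finset.card_insert_le e R
        rw [← Finset.coe_insert] at h1 hcyc
        exact ih (insert e R) B (by omega) hcyc
          (fun u v huv => (hB u v huv).mono (Finset.subset_insert e R)) h1

theorem lower (t : ℕ) (ht : t ≤ 10) : ¬ BuilderWinsIn (cycleGraph 4) (pathGraph 6) ∅ ∅ t := by
  have := painter t ∅ ∅ (by simpa using ht) (by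
    rintro ⟨f, -, h⟩
    have := h 0 1 (by rw [cycleGraph_adj]; decide)
    simp at this) (by simp)
  simpa using this

end C4P6

/-- The online size Ramsey number of the 4-cycle versus the path on six vertices
equals 11: `ř(C₄, P₆) = 11`. -/
theorem onlineRamsey_C4_P6 : onlineRamsey (cycleGraph 4) (pathGraph 6) = 11 := by
  have hmem : (11 : ℕ) ∈ {t | BuilderWinsIn (cycleGraph 4) (pathGraph 6) ∅ ∅ t} := C4P6.upper
  refine le_antisymm (Nat.sInf_le hmem) (le_csInf ⟨11, hmem⟩ fun t ht => ?_)
  by_contra hlt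
  exact C4P6.lower t (by omega) ht
end

section
/- Builder has a strategy in the online Ramsey game with target graphs C₄ (red) and P₆ (blue) that guarantees, against every Painter strategy, that after at most 11 rounds the colored edges contain a red copy of C₄ or a blue copy of P₆; in particular ř(C₄,P₆) ≤ 11. -/
open SimpleGraph

/-- A Builder strategy tree.  `n u v x y`: choose the edge `uv`, continue with `x` if it is
colored red and with `y` if it is colored blue.  `c ..`: a red four-cycle has appeared.
`p ..`: a blue path on six vertices has appeared. -/
inductive Strat where
  | c (a b c d : ℕ)
  | p (a b c d e f : ℕ)
  | n (u v : ℕ) (x y : Strat)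

/-- Membership of an unordered pair in a list of edges. -/
def hasE (L : List (ℕ × ℕ)) (a b : ℕ) : Bool :=
  L.any fun q => (q.1 == a && q.2 == b) || (q.1 == b && q.2 == a)

/-- The set of edges described by a list. -/
def toS (L : List (ℕ × ℕ)) : Set (Sym2 ℕ) := {e | ∃ q ∈ L, e = s(q.1, q.2)}

lemma hasE_iff (L : List (ℕ × ℕ)) (a b : ℕ) : hasE L a b = true ↔ s(a, b) ∈ toS L := by
  simp only [hasE, toS, List.any_eq_true, Set.mem_setOf_eq, Sym2.eq_iff, Bool.or_eq_true,
    Bool.and_eq_true, beq_iff_eq]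
  constructor
  · rintro ⟨q, hq, h⟩
    exact ⟨q, hq, by omega⟩
  · rintro ⟨q, hq, h⟩
    exact ⟨q, hq, by omega⟩

lemma toS_cons (u v : ℕ) (L : List (ℕ × ℕ)) : toS ((u, v) :: L) = insert s(u, v) (toS L) := by
  ext e
  simp [toS]

lemma toS_nil : toS [] = ∅ := by
  ext e
  simp [toS]

/-- All entries of a list of naturals are distinct. -/
def distinct : List ℕ → Bool
  | [] => true
  | a :: l => l.all (fun b => a != b) && distinct l

/-- Checks that a strategy tree wins within `r` rounds. -/
def chk : Strat → List (ℕ × ℕ) → List (ℕ × ℕ) → ℕ → Bool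
  | .c a b c d, R, _, _ =>
      distinct [a, b, c, d] && hasE R a b && hasE R b c && hasE R c d && hasE R d a
  | .p a b c d e f, _, B, _ =>
      distinct [a, b, c, d, e, f] && hasE B a b && hasE B b c && hasE B c d && hasE B d e &&
        hasE B e f
  | .n _ _ _ _, _, _, 0 => false
  | .n u v x y, R, B, r + 1 =>
      u != v && !hasE R u v && !hasE B u v && chk x ((u, v) :: R) B r && chk y R ((u, v) :: B) r

lemma wins_of_copy {V W : Type*} {G : SimpleGraph V} {H : SimpleGraph W} {R B : Set (Sym2 ℕ)}
    (h : HasCopy G R ∨ HasCopy H B) (r : ℕ) : BuilderWinsIn G H R B r := by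
  cases r with
  | zero => exact h
  | succ r => exact h.elim Or.inl fun h => Or.inr (Or.inl h)

lemma copy_C4 {S : Set (Sym2 ℕ)} {a b c d : ℕ} (hd : distinct [a, b, c, d] = true)
    (h1 : s(a, b) ∈ S) (h2 : s(b, c) ∈ S) (h3 : s(c, d) ∈ S) (h4 : s(d, a) ∈ S) :
    HasCopy (cycleGraph 4) S := by
  simp [distinct] at hd
  refine ⟨![a, b, c, d], ?_, ?_⟩
  · intro i j hij
    fin_cases i <;> fin_cases j <;> simp at hij ⊢ <;> omega
  · have g1 : s(b, a) ∈ S := Sym2.eq_swap ▸ h1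
    have g2 : s(c, b) ∈ S := Sym2.eq_swap ▸ h2
    have g3 : s(d, c) ∈ S := Sym2.eq_swap ▸ h3
    have g4 : s(a, d) ∈ S := Sym2.eq_swap ▸ h4
    intro i j hij
    rw [cycleGraph_adj] at hij
    fin_cases i <;> fin_cases j <;>
      first
      | assumption
      | (exfalso; revert hij; decide)

lemma copy_P6 {S : Set (Sym2 ℕ)} {a b c d e f : ℕ} (hd : distinct [a, b, c, d, e, f] = true)
    (h1 : s(a, b) ∈ S) (h2 : s(b, c) ∈ S) (h3 : s(c, d) ∈ S) (h4 : s(d, e) ∈ S)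
    (h5 : s(e, f) ∈ S) : HasCopy (pathGraph 6) S := by
  simp [distinct] at hd
  refine ⟨![a, b, c, d, e, f], ?_, ?_⟩
  · intro i j hij
    fin_cases i <;> fin_cases j <;> simp at hij ⊢ <;> omega
  · have g1 : s(b, a) ∈ S := Sym2.eq_swap ▸ h1
    have g2 : s(c, b) ∈ S := Sym2.eq_swap ▸ h2
    have g3 : s(d, c) ∈ S := Sym2.eq_swap ▸ h3
    have g4 : s(e, d) ∈ S := Sym2.eq_swap ▸ h4
    have g5 : s(f, e) ∈ S := Sym2.eq_swap ▸ h5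
    intro i j hij
    rw [pathGraph_adj] at hij
    fin_cases i <;> fin_cases j <;>
      first
      | assumption
      | (exfalso; revert hij; decide)

lemma chk_sound (t : Strat) : ∀ (R B : List (ℕ × ℕ)) (r : ℕ), chk t R B r = true →
    BuilderWinsIn (cycleGraph 4) (pathGraph 6) (toS R) (toS B) r := by
  induction t with
  | c a b c d =>
    intro R B r h
    simp only [chk, Bool.and_eq_true, hasE_iff] at h
    obtain ⟨⟨⟨⟨h0, h1⟩, h2⟩, h3⟩, h4⟩ := h
    exact wins_of_copy (Or.inl (copy_C4 h0 h1 h2 h3 h4)) r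
  | p a b c d e f =>
    intro R B r h
    simp only [chk, Bool.and_eq_true, hasE_iff] at h
    obtain ⟨⟨⟨⟨⟨h0, h1⟩, h2⟩, h3⟩, h4⟩, h5⟩ := h
    exact wins_of_copy (Or.inr (copy_P6 h0 h1 h2 h3 h4 h5)) r
  | n u v x y ihx ihy =>
    intro R B r h
    cases r with
    | zero => simp [chk] at h
    | succ r =>
      simp only [chk, Bool.and_eq_true, bne_iff_ne, ne_eq, Bool.not_eq_true',
        ← Bool.not_eq_true, hasE_iff] at h
      obtain ⟨⟨⟨⟨h0, h1⟩, h2⟩, h3⟩, h4⟩ := h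
      refine Or.inr (Or.inr ⟨s(u, v), by simpa using h0, h1, h2, ?_, ?_⟩)
      · rw [← toS_cons]
        exact ihx _ _ _ h3
      · rw [← toS_cons]
        exact ihy _ _ _ h4

open Strat in
/-- Builder's winning strategy. -/
def strategy : Strat :=
  (n 0 1 (n 0 2 (n 1 3 (n 2 3 (c 0 1 3 2) (n 0 4 (n 1 2 (n 0 3 (c 0 2 1 3) (n 1 4 (c 0 2 1 4) (n
  2 4 (c 0 1 2 4) (n 0 5 (n 1 5 (c 0 2 1 5) (p 0 3 2 4 1 5)) (p 1 4 2 3 0 5))))) (n 3 4 (c 0 1 3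
  4) (n 1 5 (n 4 5 (c 0 1 5 4) (n 0 3 (n 0 5 (c 0 3 1 5) (p 0 5 4 3 2 1)) (n 2 5 (c 0 1 5 2) (p
  0 3 4 5 2 1)))) (n 0 5 (n 4 6 (n 5 6 (c 0 4 6 5) (p 4 3 2 1 5 6)) (p 5 1 2 3 4 6)) (p 0 5 1 2
  3 4))))) (n 1 5 (n 2 5 (c 0 1 5 2) (n 3 4 (n 4 5 (c 1 3 4 5) (n 0 6 (n 3 6 (c 0 1 3 6) (p 0 4
  5 2 3 6)) (p 3 2 5 4 0 6))) (n 0 6 (n 5 6 (c 0 1 5 6) (p 0 4 3 2 5 6)) (p 5 2 3 4 0 6)))) (n 0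
  5 (n 3 5 (c 0 1 3 5) (n 1 4 (n 2 4 (c 0 1 4 2) (p 0 4 2 3 5 1)) (p 0 4 1 5 3 2))) (n 1 2 (n 2
  4 (n 3 4 (c 1 2 4 3) (p 1 5 0 4 3 2)) (p 1 5 0 4 2 3)) (p 3 2 1 5 0 4)))))) (n 2 4 (n 1 4 (c 0
  1 4 2) (n 0 5 (n 4 5 (c 0 2 4 5) (n 2 5 (n 0 6 (n 2 6 (c 0 5 2 6) (n 5 6 (c 0 2 5 6) (p 2 6 5
  4 1 3))) (n 0 4 (c 0 4 2 5) (n 1 5 (c 0 1 5 2) (p 3 1 5 4 0 6)))) (n 0 3 (n 2 6 (n 3 6 (c 0 2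
  6 3) (p 2 5 4 1 3 6)) (p 3 1 4 5 2 6)) (p 0 3 1 4 5 2)))) (n 0 6 (n 4 6 (c 0 2 4 6) (n 0 3 (n
  3 5 (n 5 6 (c 0 3 5 6) (p 0 5 6 4 1 3)) (p 0 5 3 1 4 6)) (p 5 0 3 1 4 6))) (n 3 5 (n 3 6 (n 4
  5 (n 4 6 (c 3 5 4 6) (p 3 1 4 6 0 5)) (p 3 1 4 5 0 6)) (p 4 1 3 6 0 5)) (p 4 1 3 5 0 6))))) (n
  1 5 (n 2 5 (c 0 1 5 2) (n 0 3 (n 3 5 (c 0 1 5 3) (n 0 4 (n 1 6 (n 4 6 (c 0 1 6 4) (p 1 3 5 2 4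
  6)) (p 4 2 5 3 1 6)) (p 0 4 2 5 3 1))) (n 0 4 (n 0 5 (n 1 4 (c 0 4 1 5) (p 0 3 1 4 2 5)) (p 1
  3 0 5 2 4)) (p 1 3 0 4 2 5)))) (n 0 3 (n 2 6 (n 3 6 (c 0 2 6 3) (n 2 5 (n 4 5 (n 4 6 (c 2 5 4
  6) (p 2 4 6 3 1 5)) (p 2 4 5 1 3 6)) (p 4 2 5 1 3 6))) (n 3 4 (n 0 5 (n 4 5 (c 0 3 4 5) (p 3 1
  5 4 2 6)) (n 1 4 (c 0 1 4 3) (p 0 5 1 4 2 6))) (p 5 1 3 4 2 6))) (n 0 4 (n 2 5 (n 4 5 (c 0 2 5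
  4) (p 0 3 1 5 4 2)) (p 0 3 1 5 2 4)) (p 2 4 0 3 1 5)))))) (n 1 3 (n 3 4 (n 0 4 (c 0 1 3 4) (n
  1 5 (n 4 5 (c 1 3 4 5) (n 3 5 (n 1 6 (n 3 6 (c 1 5 3 6) (n 5 6 (c 1 3 5 6) (p 2 0 4 5 6 3)))
  (n 0 5 (c 0 1 3 5) (n 1 4 (c 1 4 3 5) (p 2 0 5 4 1 6)))) (n 1 2 (n 2 6 (n 3 6 (c 1 2 6 3) (p 2
  0 4 5 3 6)) (p 3 5 4 0 2 6)) (p 1 2 0 4 5 3)))) (n 1 6 (n 4 6 (c 1 3 4 6) (n 1 2 (n 2 5 (n 5 6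
  (c 1 2 5 6) (p 1 5 6 4 0 2)) (p 1 5 2 0 4 6)) (p 5 1 2 0 4 6))) (n 2 5 (n 2 6 (n 4 5 (n 4 6 (c
  2 5 4 6) (p 2 0 4 6 1 5)) (p 2 0 4 5 1 6)) (p 4 0 2 6 1 5)) (p 4 0 2 5 1 6))))) (n 0 5 (n 3 5
  (c 0 1 3 5) (n 1 2 (n 2 5 (c 0 1 2 5) (n 1 4 (n 0 6 (n 4 6 (c 0 1 4 6) (p 0 2 5 3 4 6)) (p 4 3
  5 2 0 6)) (p 0 2 5 3 4 1))) (n 0 4 (n 1 4 (n 1 5 (c 0 4 1 5) (p 0 2 1 5 3 4)) (p 0 2 1 4 3 5))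
  (p 1 2 0 4 3 5)))) (n 1 2 (n 2 6 (n 0 6 (c 0 1 2 6) (n 3 6 (c 1 2 6 3) (n 1 5 (n 5 6 (c 1 2 6
  5) (p 2 0 5 6 3 4)) (p 1 5 0 6 3 4)))) (n 3 5 (n 3 6 (n 4 5 (n 4 6 (c 3 5 4 6) (p 3 4 6 2 0
  5)) (p 3 4 5 0 2 6)) (p 4 3 6 2 0 5)) (p 4 3 5 0 2 6))) (n 1 4 (n 3 5 (n 4 5 (c 1 3 5 4) (p 1
  2 0 5 4 3)) (p 1 2 0 5 3 4)) (p 3 4 1 2 0 5))))) (n 0 4 (n 4 5 (n 1 5 (c 0 1 5 4) (n 0 6 (n 5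
  6 (c 0 4 5 6) (n 0 3 (n 2 3 (n 2 6 (c 0 3 2 6) (p 0 2 6 5 1 3)) (p 0 2 3 1 5 6)) (p 2 0 3 1 5
  6))) (n 2 3 (n 2 5 (n 3 6 (n 5 6 (c 2 3 6 5) (p 2 0 6 5 1 3)) (p 2 0 6 3 1 5)) (p 3 1 5 2 0
  6)) (p 5 1 3 2 0 6)))) (n 1 2 (n 2 4 (c 0 1 2 4) (n 0 3 (n 1 5 (n 3 5 (c 0 1 5 3) (p 0 2 4 5 3
  1)) (p 0 2 4 5 1 3)) (p 1 3 0 2 4 5))) (n 0 5 (n 3 4 (n 3 5 (c 0 4 3 5) (p 0 2 1 3 5 4)) (p 0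
  2 1 3 4 5)) (p 3 1 2 0 5 4)))) (n 1 2 (n 1 4 (n 2 3 (n 3 4 (c 1 2 3 4) (n 2 5 (n 0 5 (c 0 1 2
  5) (n 4 5 (c 1 2 5 4) (p 1 3 4 5 0 2))) (p 1 3 4 0 2 5))) (n 4 5 (n 0 5 (c 0 1 4 5) (n 2 5 (c
  1 2 5 4) (p 1 3 2 5 0 4))) (p 1 3 2 0 4 5))) (n 2 5 (n 3 5 (n 2 6 (n 3 6 (c 2 5 3 6) (p 2 0 4
  1 3 6)) (p 3 1 4 0 2 6)) (p 2 0 4 1 3 5)) (p 3 1 4 0 2 5))) (n 3 5 (n 4 5 (n 3 6 (n 4 6 (c 3 5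
  4 6) (p 3 1 2 0 4 6)) (p 4 0 2 1 3 6)) (p 3 1 2 0 4 5)) (p 4 0 2 1 3 5)))))) (n 2 3 (n 2 4 (n
  3 5 (n 4 5 (c 2 3 5 4) (n 0 2 (n 3 4 (n 0 3 (c 0 2 4 3) (n 2 5 (c 2 4 3 5) (n 1 2 (n 1 4 (c 1
  2 3 4) (p 2 5 4 1 0 3)) (p 3 0 1 2 5 4)))) (n 0 5 (c 0 2 3 5) (n 1 2 (n 1 6 (n 3 6 (c 1 2 3 6)
  (p 1 0 5 4 3 6)) (p 3 4 5 0 1 6)) (p 2 1 0 5 4 3)))) (n 1 3 (n 1 4 (c 1 3 2 4) (n 2 6 (n 5 6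
  (c 2 3 5 6) (p 2 0 1 4 5 6)) (p 5 4 1 0 2 6))) (n 2 5 (n 3 4 (c 2 4 3 5) (p 2 0 1 3 4 5)) (p 3
  1 0 2 5 4))))) (n 4 6 (n 3 6 (c 2 3 6 4) (n 0 2 (n 0 6 (c 0 2 4 6) (n 1 2 (n 0 4 (n 1 4 (c 0 2
  1 4) (p 4 1 0 6 3 5)) (n 1 6 (c 1 2 4 6) (p 4 0 1 6 3 5))) (p 2 1 0 6 3 5))) (n 1 5 (n 1 6 (n
  2 5 (n 2 6 (c 1 5 2 6) (p 1 0 2 6 3 5)) (p 1 0 2 5 3 6)) (p 2 0 1 6 3 5)) (p 2 0 1 5 3 6))))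
  (n 0 3 (n 0 4 (c 0 3 2 4) (n 1 3 (n 0 5 (n 1 5 (c 0 3 1 5) (p 3 5 1 0 4 6)) (n 1 4 (c 1 3 2 4)
  (p 3 5 0 1 4 6))) (p 5 3 1 0 4 6))) (n 1 4 (n 1 6 (n 4 5 (n 5 6 (c 1 4 5 6) (p 1 0 3 5 6 4))
  (p 1 0 3 5 4 6)) (p 4 6 1 0 3 5)) (p 5 3 0 1 4 6))))) (n 3 4 (n 2 5 (n 4 5 (c 2 3 4 5) (n 0 3
  (n 0 5 (c 0 3 2 5) (n 1 3 (n 1 6 (n 2 6 (c 1 3 2 6) (p 1 0 5 4 2 6)) (p 2 4 5 0 1 6)) (p 2 4 5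
  0 1 3))) (n 1 2 (n 1 5 (n 3 5 (c 1 2 3 5) (p 1 0 3 5 4 2)) (p 2 4 5 1 0 3)) (p 3 0 1 2 4 5))))
  (n 4 6 (n 2 6 (c 2 3 4 6) (n 3 5 (n 5 6 (c 3 4 6 5) (n 0 4 (n 0 5 (c 0 4 3 5) (p 1 0 5 6 2 4))
  (p 1 0 4 2 5 6))) (n 0 3 (n 0 6 (c 0 3 4 6) (p 1 0 6 2 5 3)) (p 1 0 3 5 2 4)))) (n 0 5 (n 0 6
  (n 1 5 (n 1 6 (c 0 5 1 6) (p 0 1 6 4 2 5)) (p 0 1 5 2 4 6)) (p 1 0 6 4 2 5)) (p 1 0 5 2 4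
  6)))) (n 0 2 (n 0 5 (n 3 5 (c 0 2 3 5) (n 1 2 (n 1 5 (c 0 2 1 5) (p 0 1 5 3 4 2)) (p 0 1 2 4 3
  5))) (n 1 2 (n 1 3 (n 2 5 (n 3 5 (c 1 2 5 3) (p 1 0 5 3 4 2)) (p 1 0 5 2 4 3)) (p 2 4 3 1 0
  5)) (p 3 4 2 1 0 5))) (n 1 5 (n 3 5 (n 1 6 (n 3 6 (c 1 5 3 6) (p 1 0 2 4 3 6)) (p 3 4 2 0 1
  6)) (p 1 0 2 4 3 5)) (p 3 4 2 0 1 5))))) (n 0 4 (n 1 4 (n 0 5 (n 1 5 (c 0 4 1 5) (n 2 4 (n 2 5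
  (c 0 4 2 5) (n 3 4 (n 0 6 (n 3 6 (c 0 4 3 6) (p 0 1 5 2 3 6)) (p 3 2 5 1 0 6)) (p 0 1 5 2 3
  4))) (n 0 3 (n 3 5 (n 4 5 (c 0 3 5 4) (p 0 1 5 4 2 3)) (p 0 1 5 3 2 4)) (p 4 2 3 0 1 5)))) (n
  1 6 (n 0 6 (c 0 4 1 6) (n 4 5 (n 5 6 (c 1 4 5 6) (n 1 2 (n 2 5 (c 1 2 5 4) (p 1 0 6 5 2 3)) (p
  3 2 1 0 5 6))) (n 2 4 (n 2 6 (c 1 4 2 6) (p 3 2 6 0 5 4)) (p 1 0 5 4 2 3)))) (n 2 5 (n 2 6 (n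
  3 5 (n 3 6 (c 2 5 3 6) (p 2 3 6 1 0 5)) (p 2 3 5 0 1 6)) (p 3 2 6 1 0 5)) (p 3 2 5 0 1 6))))
  (n 0 2 (n 2 5 (n 4 5 (c 0 2 5 4) (n 0 3 (n 3 5 (c 0 2 5 3) (p 0 1 4 5 3 2)) (p 2 3 0 1 4 5)))
  (n 0 3 (n 0 5 (n 3 4 (n 4 5 (c 0 3 4 5) (p 0 1 4 5 2 3)) (p 0 1 4 3 2 5)) (p 3 2 5 0 1 4)) (p
  4 1 0 3 2 5))) (n 3 5 (n 4 5 (n 3 6 (n 4 6 (c 3 5 4 6) (p 3 2 0 1 4 6)) (p 4 1 0 2 3 6)) (p 3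
  2 0 1 4 5)) (p 4 1 0 2 3 5)))) (n 1 2 (n 1 3 (n 2 5 (n 3 5 (c 1 2 5 3) (n 1 5 (n 2 4 (n 4 5 (c
  1 2 4 5) (p 1 0 4 5 3 2)) (p 1 0 4 2 3 5)) (p 2 3 5 1 0 4))) (n 1 5 (n 3 4 (n 4 5 (c 1 3 4 5)
  (p 1 0 4 5 2 3)) (p 1 0 4 3 2 5)) (p 3 2 5 1 0 4))) (n 2 5 (n 4 5 (n 2 6 (n 4 6 (c 2 5 4 6) (p
  2 3 1 0 4 6)) (p 4 0 1 3 2 6)) (p 2 3 1 0 4 5)) (p 4 0 1 3 2 5))) (n 3 5 (n 4 5 (n 3 6 (n 4 6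
  (c 3 5 4 6) (p 3 2 1 0 4 6)) (p 4 0 1 2 3 6)) (p 3 2 1 0 4 5)) (p 4 0 1 2 3 5))))))

lemma chk_strategy : chk strategy [] [] 11 = true := by decide +kernel

/-- Builder has a strategy in the online Ramsey game with targets red `C₄` and blue `P₆`
that guarantees a win within at most 11 rounds against every Painter strategy; in
particular `ř(C₄, P₆) ≤ 11`. -/
theorem builder_wins_C4_P6_in_eleven :
    BuilderWinsIn (cycleGraph 4) (pathGraph 6) ∅ ∅ 11 ∧
      onlineRamsey (cycleGraph 4) (pathGraph 6) ≤ 11 := by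
  have h : BuilderWinsIn (cycleGraph 4) (pathGraph 6) ∅ ∅ 11 := by
    have := chk_sound strategy [] [] 11 chk_strategy
    rwa [toS_nil] at this
  exact ⟨h, Nat.sInf_le h⟩
end

section
/- For k = 6 and k = 7, the online size Ramsey number of the 4-cycle versus the path on k vertices satisfies ř(C₄,P_k) ≥ 2k − 1; equivalently, Painter has a strategy surviving 2k − 2 rounds without creating a red C₄ or a blue P_k. -/
open SimpleGraph

namespace C4Path

/-! ### The finite search -/

/-- A symmetric numerical code for the unordered pair `{a, b}`. -/
def code (a b : ℕ) : ℕ := 64 * (a + b) + a * b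

lemma code_comm (a b : ℕ) : code a b = code b a := by
  unfold code; ring

/-- Insert `e` into `l` unless it is already there. -/
def ins (e : ℕ) (l : List ℕ) : List ℕ :=
  bif l.any (fun x => Nat.beq e x) then l else e :: l

/-- `search k n i l`: it is impossible to extend the edge list `l` to at most `k - 1` edges on
`{0, …, k-1}` so that for each of the `n` indices `j = i, i+1, …` the vertices `j` and `j+1`
are joined by a path with three edges. -/
def search (k : ℕ) : ℕ → ℕ → List ℕ → Bool
  | 0, _, _ => false
  | n + 1, i, l =>
    (List.range k).all fun a =>
      Nat.beq a i || (Nat.beq a (i + 1) ||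
      (List.range k).all fun b =>
        Nat.beq b i || (Nat.beq b (i + 1) || (Nat.beq a b ||
        (let l' := ins (code b (i + 1)) (ins (code a b) (ins (code i a) l))
         Nat.blt (k - 1) l'.length || search k n (i + 1) l'))))

lemma ins_spec (S : Finset ℕ) (e : ℕ) (l : List ℕ) (he : e ∈ S) (hl : l.Nodup ∧ ∀ x ∈ l, x ∈ S) :
    (ins e l).Nodup ∧ ∀ x ∈ ins e l, x ∈ S := by
  unfold ins
  cases h : l.any (fun x => Nat.beq e x)
  · simp only [cond_false]
    refine ⟨List.nodup_cons.2 ⟨?_, hl.1⟩, ?_⟩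
    · intro hm
      rw [List.any_eq_false] at h
      exact h e hm (Nat.beq_refl e)
    · intro x hx
      rcases List.mem_cons.1 hx with rfl | hx
      · exact he
      · exact hl.2 x hx
  · simpa using hl

lemma search_sound (k : ℕ) (S : Finset ℕ) (hS : S.card ≤ k - 1) :
    ∀ (n i : ℕ) (l : List ℕ), (l.Nodup ∧ ∀ x ∈ l, x ∈ S) →
      (∀ j, i ≤ j → j < i + n → ∃ a b, a < k ∧ b < k ∧ a ≠ j ∧ a ≠ j + 1 ∧ b ≠ j ∧ b ≠ j + 1 ∧
        a ≠ b ∧ code j a ∈ S ∧ code a b ∈ S ∧ code b (j + 1) ∈ S) →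
      search k n i l = false := by
  intro n
  induction n with
  | zero => intro i l _ _; rfl
  | succ n ih =>
    intro i l hl h
    obtain ⟨a, b, ha, hb, h1, h2, h3, h4, h5, c1, c2, c3⟩ := h i le_rfl (by omega)
    have hl' := ins_spec S _ _ c3 (ins_spec S _ _ c2 (ins_spec S _ _ c1 hl))
    have hrec := ih (i + 1) _ hl' (fun j hj hj' => h j (by omega) (by omega))
    have hlen : (ins (code b (i + 1)) (ins (code a b) (ins (code i a) l))).length ≤ k - 1 := by
      refine le_trans ?_ hS
      rw [← List.toFinset_card_of_nodup hl'.1]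
      apply Finset.card_le_card
      intro x hx
      exact hl'.2 x (List.mem_toFinset.1 hx)
    have hblt : Nat.blt (k - 1)
        (ins (code b (i + 1)) (ins (code a b) (ins (code i a) l))).length = false := by
      rw [Bool.eq_false_iff]
      intro hc
      have := Nat.le_of_ble_eq_true hc
      omega
    have nb : ∀ x y : ℕ, x ≠ y → Nat.beq x y = false := by
      intro x y hxy
      rw [Bool.eq_false_iff]
      exact fun hc => hxy (Nat.eq_of_beq_eq_true hc)
    rw [search, List.all_eq_false]
    refine ⟨a, List.mem_range.2 ha, ?_⟩
    rw [nb _ _ h1, nb _ _ h2, Bool.false_or, Bool.false_or, Bool.not_eq_true, List.all_eq_false]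
    refine ⟨b, List.mem_range.2 hb, ?_⟩
    rw [nb _ _ h3, nb _ _ h4, nb _ _ h5]
    simp only [Bool.false_or, hblt, hrec]
    decide

set_option maxRecDepth 100000 in
lemma search_six : search 6 5 0 [] = true := by decide +kernel

set_option maxRecDepth 100000 in
lemma search_seven : search 7 6 0 [] = true := by decide +kernel

/-! ### Connectivity -/

lemma card_le_of_reachable (R : Finset (Sym2 ℕ)) (v : ℕ) (T : Finset ℕ)
    (hT : ∀ t ∈ T, (fromEdgeSet (R : Set (Sym2 ℕ))).Reachable v t) : T.card ≤ R.card + 1 := by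
  classical
  set G := fromEdgeSet (R : Set (Sym2 ℕ)) with hG
  set C := G.connectedComponentMk v with hC
  have hfin : (C.supp).Finite := by
    refine Set.Finite.subset (s := insert v (⋃ e ∈ R, {x | x ∈ e})) ?_ ?_
    · refine Set.Finite.insert _ (Set.Finite.biUnion R.finite_toSet ?_)
      intro e _
      induction e using Sym2.ind with
      | _ x y =>
        refine Set.Finite.subset (Set.toFinite {x, y}) ?_
        intro z hz
        simpa using hz
    · intro x hx
      have hr : G.Reachable x v := ConnectedComponent.exact hx
      by_cases hxv : x = v
      · exact Or.inl hxv
      · right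
        obtain ⟨w⟩ := hr
        cases w with
        | nil => exact absurd rfl hxv
        | cons h p =>
          rename_i y
          have := (fromEdgeSet_adj _).1 h
          exact Set.mem_biUnion (show s(x, y) ∈ (R : Set _) from this.1) (by simp)
  have hconn := C.connected_toSimpleGraph
  have hcard := hconn.card_vert_le_card_edgeSet_add_one
  have h1 : T.card ≤ Nat.card C := by
    have hle : (T : Set ℕ) ⊆ C.supp := by
      intro t ht
      exact ConnectedComponent.sound (hT t ht).symm
    have := Set.ncard_le_ncard hle hfin
    rw [Set.ncard_coe_finset] at this
    exact this
  have h2 : Nat.card C.toSimpleGraph.edgeSet ≤ R.card := by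
    have : Nat.card C.toSimpleGraph.edgeSet ≤ Nat.card (R : Set (Sym2 ℕ)) := by
      refine Nat.card_le_card_of_injective
        (fun e => ⟨Sym2.map Subtype.val e.1, ?_⟩) ?_
      · obtain ⟨e, he⟩ := e
        induction e using Sym2.ind with
        | _ x y =>
          have h : G.Adj x y := he
          exact ((fromEdgeSet_adj _).1 h).1
      · intro e e' h
        have := congrArg Subtype.val h
        exact Subtype.ext (Sym2.map.injective Subtype.val_injective this)
    simpa using this
  omega

/-! ### The end position -/

/-- `e` is closed by a path of three edges in `R`. -/
def Closed (R : Finset (Sym2 ℕ)) (e : Sym2 ℕ) : Prop :=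
  ∃ x y a b, e = s(x, y) ∧ a ≠ x ∧ a ≠ y ∧ b ≠ x ∧ b ≠ y ∧ a ≠ b ∧
    s(x, a) ∈ R ∧ s(a, b) ∈ R ∧ s(b, y) ∈ R

lemma closed_pair {R : Finset (Sym2 ℕ)} {x y : ℕ} (h : Closed R s(x, y)) :
    ∃ a b, a ≠ x ∧ a ≠ y ∧ b ≠ x ∧ b ≠ y ∧ a ≠ b ∧
      s(x, a) ∈ R ∧ s(a, b) ∈ R ∧ s(b, y) ∈ R := by
  obtain ⟨x', y', a, b, he, h1, h2, h3, h4, h5, c1, c2, c3⟩ := h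
  rcases Sym2.eq_iff.1 he with ⟨rfl, rfl⟩ | ⟨rfl, rfl⟩
  · exact ⟨a, b, h1, h2, h3, h4, h5, c1, c2, c3⟩
  · refine ⟨b, a, h4, h3, h2, h1, h5.symm, ?_, ?_, ?_⟩
    · rwa [Sym2.eq_swap]
    · rwa [Sym2.eq_swap]
    · rwa [Sym2.eq_swap]

lemma end_position (k : ℕ) (hk : search k (k - 1) 0 [] = true) (R : Finset (Sym2 ℕ))
    (hR : R.card ≤ k - 1) (f : ℕ → ℕ) (hf : ∀ i < k, ∀ j < k, f i = f j → i = j)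
    (h : ∀ i, i + 1 < k → Closed R s(f i, f (i + 1))) : False := by
  classical
  have hk0 : 0 < k := by
    rcases Nat.eq_zero_or_pos k with rfl | hp
    · simp [search] at hk
    · exact hp
  set G := fromEdgeSet (R : Set (Sym2 ℕ)) with hG
  have adj : ∀ x y, x ≠ y → s(x, y) ∈ R → G.Reachable x y := fun x y hxy hm =>
    ((fromEdgeSet_adj _).2 ⟨hm, hxy⟩ : G.Adj x y).reachable
  have reach : ∀ i, i < k → G.Reachable (f 0) (f i) := by
    intro i
    induction i with
    | zero => intro _; exact Reachable.refl _
    | succ i ih =>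
      intro hi
      obtain ⟨a, b, h1, h2, h3, h4, h5, c1, c2, c3⟩ := closed_pair (h i hi)
      exact (ih (by omega)).trans
        ((adj _ _ h1.symm c1).trans ((adj _ _ h5 c2).trans (adj _ _ h4 c3)))
  have inj : Set.InjOn f (Finset.range k : Set ℕ) := by
    intro i hi j hj hij
    exact hf i (by simpa using hi) j (by simpa using hj) hij
  have key : ∀ w, G.Reachable (f 0) w → ∃ i < k, f i = w := by
    intro w hw
    by_contra hcon
    push Not at hcon
    have hnot : w ∉ (Finset.range k).image f := by
      intro hm
      obtain ⟨i, hi, hiw⟩ := Finset.mem_image.1 hm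
      exact hcon i (Finset.mem_range.1 hi) hiw
    have := card_le_of_reachable R (f 0) (insert w ((Finset.range k).image f)) (by
      intro t ht
      rcases Finset.mem_insert.1 ht with rfl | ht
      · exact hw
      · obtain ⟨i, hi, rfl⟩ := Finset.mem_image.1 ht
        exact reach i (Finset.mem_range.1 hi))
    rw [Finset.card_insert_of_notMem hnot, Finset.card_image_of_injOn inj,
      Finset.card_range] at this
    omega
  -- the inverse of `f`
  have hg : ∃ g : ℕ → ℕ, ∀ i < k, g (f i) = i := by
    refine ⟨Function.invFunOn f (Finset.range k : Set ℕ), fun i hi => ?_⟩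
    exact inj.leftInvOn_invFunOn (by simpa using hi)
  obtain ⟨g, hg⟩ := hg
  let c : Sym2 ℕ → ℕ := Sym2.lift ⟨fun x y => code (g x) (g y), fun x y => code_comm _ _⟩
  have hc : ∀ i < k, ∀ j < k, s(f i, f j) ∈ R → code i j ∈ R.image c := by
    intro i hi j hj hm
    refine Finset.mem_image.2 ⟨_, hm, ?_⟩
    simp [c, hg i hi, hg j hj]
  have := search_sound k (R.image c) (Finset.card_image_le.trans hR) (k - 1) 0 []
    ⟨List.nodup_nil, by simp⟩ (by
      intro j _ hj
      obtain ⟨a, b, h1, h2, h3, h4, h5, c1, c2, c3⟩ := closed_pair (h j (by omega))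
      have ra := (reach j (by omega)).trans (adj _ _ h1.symm c1)
      obtain ⟨a', ha', rfl⟩ := key a ra
      obtain ⟨b', hb', rfl⟩ := key b (ra.trans (adj _ _ h5 c2))
      refine ⟨a', b', ha', hb', ?_, ?_, ?_, ?_, ?_, hc _ (by omega) _ ha' c1, hc _ ha' _ hb' c2,
        hc _ hb' _ (by omega) c3⟩
      · rintro rfl; exact h1 rfl
      · rintro rfl; exact h2 rfl
      · rintro rfl; exact h3 rfl
      · rintro rfl; exact h4 rfl
      · rintro rfl; exact h5 rfl)
  rw [hk] at this
  exact absurd this (by decide)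

lemma no_blue_path (k : ℕ) (hk : search k (k - 1) 0 [] = true) (R B : Finset (Sym2 ℕ))
    (hB : ∀ e ∈ B, Closed R e) (hcard : R.card + B.card ≤ 2 * k - 2) :
    ¬ HasCopy (pathGraph k) (B : Set (Sym2 ℕ)) := by
  classical
  rintro ⟨f, hf, hadj⟩
  let F : ℕ → ℕ := fun i => if h : i < k then f ⟨i, h⟩ else 0
  have hF : ∀ i (h : i < k), F i = f ⟨i, h⟩ := fun i h => by simp [F, h]
  have hinj : ∀ i < k, ∀ j < k, F i = F j → i = j := by
    intro i hi j hj hij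
    rw [hF i hi, hF j hj] at hij
    simpa using hf hij
  have hmem : ∀ i, i + 1 < k → s(F i, F (i + 1)) ∈ B := by
    intro i hi
    rw [hF i (by omega), hF (i + 1) hi]
    apply hadj
    rw [pathGraph_adj]
    left; rfl
  have hBc : k - 1 ≤ B.card := by
    have : ((Finset.range (k - 1)).image (fun i => s(F i, F (i + 1)))).card ≤ B.card := by
      apply Finset.card_le_card
      intro e he
      obtain ⟨i, hi, rfl⟩ := Finset.mem_image.1 he
      exact hmem i (by have := Finset.mem_range.1 hi; omega)
    rw [Finset.card_image_of_injOn, Finset.card_range] at this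
    · exact this
    · intro i hi j hj hij
      have hi' : i < k - 1 := by simpa using hi
      have hj' : j < k - 1 := by simpa using hj
      rcases Sym2.eq_iff.1 hij with ⟨h1, _⟩ | ⟨h1, h2⟩
      · exact hinj _ (by omega) _ (by omega) h1
      · have := hinj _ (by omega) _ (by omega) h1
        have := hinj _ (by omega) _ (by omega) h2
        omega
  exact end_position k hk R (by omega) F hinj (fun i hi => hB _ (hmem i hi))

/-! ### The Painter strategy -/

lemma closed_of_copy (R : Finset (Sym2 ℕ)) (e : Sym2 ℕ)
    (hR : ¬ HasCopy (cycleGraph 4) (R : Set (Sym2 ℕ)))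
    (h : HasCopy (cycleGraph 4) (insert e (R : Set (Sym2 ℕ)))) : Closed R e := by
  obtain ⟨f, hf, hadj⟩ := h
  have hex : ∃ a b, (cycleGraph 4).Adj a b ∧ s(f a, f b) = e := by
    by_contra hcon
    push Not at hcon
    refine hR ⟨f, hf, fun a b hab => ?_⟩
    rcases hadj a b hab with h | h
    · exact absurd h (hcon a b hab)
    · exact h
  obtain ⟨a, b, hab, rfl⟩ := hex
  have comb : ∀ a b : Fin 4, (cycleGraph 4).Adj a b → ∃ c d : Fin 4, c ≠ a ∧ c ≠ b ∧ d ≠ a ∧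
      d ≠ b ∧ c ≠ d ∧ a ≠ b ∧ (cycleGraph 4).Adj a c ∧ (cycleGraph 4).Adj c d ∧
      (cycleGraph 4).Adj d b := by
    decide
  obtain ⟨c, d, h1, h2, h3, h4, h5, h6, e1, e2, e3⟩ := comb a b hab
  have ne : ∀ {x y : Fin 4}, x ≠ y → f x ≠ f y := fun h h' => h (hf h')
  refine ⟨f a, f b, f c, f d, rfl, ne h1, ne h2, ne h3, ne h4, ne h5, ?_, ?_, ?_⟩
  · rcases hadj _ _ e1 with h | h
    · rcases Sym2.eq_iff.1 h with ⟨_, h'⟩ | ⟨h', _⟩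
      · exact absurd h' (ne h2)
      · exact absurd h' (ne h6)
    · exact h
  · rcases hadj _ _ e2 with h | h
    · rcases Sym2.eq_iff.1 h with ⟨h', _⟩ | ⟨h', _⟩
      · exact absurd h' (ne h1)
      · exact absurd h' (ne h2)
    · exact h
  · rcases hadj _ _ e3 with h | h
    · rcases Sym2.eq_iff.1 h with ⟨h', _⟩ | ⟨h', _⟩
      · exact absurd h' (ne h3)
      · exact absurd h' (ne h4)
    · exact h

lemma painter (k : ℕ) (hk : search k (k - 1) 0 [] = true) : ∀ (r : ℕ) (R B : Finset (Sym2 ℕ)),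
    ¬ HasCopy (cycleGraph 4) (R : Set (Sym2 ℕ)) → (∀ e ∈ B, Closed R e) →
    R.card + B.card + r ≤ 2 * k - 2 →
    ¬ BuilderWinsIn (cycleGraph 4) (pathGraph k) (R : Set (Sym2 ℕ)) (B : Set (Sym2 ℕ)) r := by
  classical
  intro r
  induction r with
  | zero =>
    intro R B hR hB hc hw
    rcases hw with h | h
    · exact hR h
    · exact no_blue_path k hk R B hB hc h
  | succ r ih =>
    intro R B hR hB hc hw
    rcases hw with h | h | ⟨e, _, _, _, hred, hblue⟩
    · exact hR h
    · exact no_blue_path k hk R B hB (by omega) h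
    · by_cases hcl : HasCopy (cycleGraph 4) (insert e (R : Set (Sym2 ℕ)))
      · have hce := closed_of_copy R e hR hcl
        refine ih R (insert e B) hR ?_ ?_ (by rwa [Finset.coe_insert])
        · intro e' he'
          rcases Finset.mem_insert.1 he' with rfl | he'
          · exact hce
          · exact hB _ he'
        · have := Finset.card_insert_le e B
          omega
      · refine ih (insert e R) B (by rwa [Finset.coe_insert]) ?_ ?_ (by rwa [Finset.coe_insert])
        · intro e' he'
          obtain ⟨x, y, a, b, h0, h1, h2, h3, h4, h5, c1, c2, c3⟩ := hB _ he'
          exact ⟨x, y, a, b, h0, h1, h2, h3, h4, h5, Finset.mem_insert_of_mem c1,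
            Finset.mem_insert_of_mem c2, Finset.mem_insert_of_mem c3⟩
        · have := Finset.card_insert_le e R
          omega

lemma not_win (k : ℕ) (hk : search k (k - 1) 0 [] = true) (r : ℕ) (hr : r ≤ 2 * k - 2) :
    ¬ BuilderWinsIn (cycleGraph 4) (pathGraph k) ∅ ∅ r := by
  have := painter k hk r ∅ ∅ (by
    rintro ⟨f, _, h⟩
    have := h 0 1 (by decide)
    simp at this) (by simp) (by simpa using hr)
  simpa using this

/-! ### Builder wins eventually -/

lemma builder_all {V W : Type*} (G : SimpleGraph V) (H : SimpleGraph W) (E : Finset (Sym2 ℕ))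
    (hE : ∀ e ∈ E, ¬ e.IsDiag)
    (hwin : ∀ R B : Set (Sym2 ℕ), (∀ e ∈ E, e ∈ R ∨ e ∈ B) → HasCopy G R ∨ HasCopy H B) :
    ∀ (n : ℕ) (R B : Set (Sym2 ℕ)) (D : Finset (Sym2 ℕ)), D ⊆ E → D.card ≤ n →
      (∀ e ∈ E, e ∉ D → e ∈ R ∨ e ∈ B) → BuilderWinsIn G H R B n := by
  classical
  intro n
  induction n with
  | zero =>
    intro R B D _ hc h
    have : D = ∅ := by simpa using hc
    subst this
    exact hwin R B (fun e he => h e he (by simp))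
  | succ n ih =>
    intro R B D hD hc h
    by_cases hall : ∀ e ∈ E, e ∈ R ∨ e ∈ B
    · rcases hwin R B hall with h | h
      · exact Or.inl h
      · exact Or.inr (Or.inl h)
    · push Not at hall
      obtain ⟨e, he, heR, heB⟩ := hall
      have heD : e ∈ D := by
        by_contra hcon
        rcases h e he hcon with h | h
        · exact heR h
        · exact heB h
      have hcard : (D.erase e).card ≤ n := by
        rw [Finset.card_erase_of_mem heD]; omega
      have hsub : D.erase e ⊆ E := (Finset.erase_subset _ _).trans hD
      refine Or.inr (Or.inr ⟨e, hE e he, heR, heB, ih _ _ (D.erase e) hsub hcard ?_,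
        ih _ _ (D.erase e) hsub hcard ?_⟩)
      · intro e' he' hn
        by_cases hee : e' = e
        · exact Or.inl (Or.inl hee)
        · rcases h e' he' (fun hm => hn (Finset.mem_erase.2 ⟨hee, hm⟩)) with h | h
          · exact Or.inl (Or.inr h)
          · exact Or.inr h
      · intro e' he' hn
        by_cases hee : e' = e
        · exact Or.inr (Or.inl hee)
        · rcases h e' he' (fun hm => hn (Finset.mem_erase.2 ⟨hee, hm⟩)) with h | h
          · exact Or.inl h
          · exact Or.inr (Or.inr h)

/-- In a coloured complete graph on `U` there is a blue path on `m + 1` vertices or a vertex that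
is joined in red to all but few vertices of `U`. -/
lemma long_path (R B : Set (Sym2 ℕ)) (U : Finset ℕ) (hU : U.Nonempty)
    (hcol : ∀ x ∈ U, ∀ y ∈ U, x ≠ y → s(x, y) ∈ R ∨ s(x, y) ∈ B) (m : ℕ) :
    (∃ x ∈ U, ∃ W ⊆ U, U.card ≤ W.card + m ∧ x ∉ W ∧ ∀ w ∈ W, s(x, w) ∈ R) ∨
    (∃ f : ℕ → ℕ, (∀ i ≤ m, f i ∈ U) ∧ (∀ i ≤ m, ∀ j ≤ m, f i = f j → i = j) ∧
      ∀ i < m, s(f i, f (i + 1)) ∈ B) := by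
  classical
  induction m with
  | zero =>
    obtain ⟨u, hu⟩ := hU
    right
    refine ⟨fun _ => u, fun _ _ => hu, fun i hi j hj _ => by omega, fun i hi => by omega⟩
  | succ m ih =>
    rcases ih with ⟨x, hx, W, hW, hc, hxW, hred⟩ | ⟨f, hfU, hinj, hblue⟩
    · exact Or.inl ⟨x, hx, W, hW, by omega, hxW, hred⟩
    · set P := (Finset.range (m + 1)).image f with hP
      by_cases hex : ∃ w ∈ U, w ∉ P ∧ s(f m, w) ∈ B
      · obtain ⟨w, hw, hwP, hwB⟩ := hex
        right
        have hne : ∀ i ≤ m, f i ≠ w := by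
          rintro i hi rfl
          exact hwP (Finset.mem_image.2 ⟨i, Finset.mem_range.2 (by omega), rfl⟩)
        refine ⟨fun i => if i ≤ m then f i else w, ?_, ?_, ?_⟩
        · intro i _
          by_cases h : i ≤ m
          · simpa [h] using hfU i h
          · simpa [h] using hw
        · intro i hi j hj hij
          by_cases h : i ≤ m <;> by_cases h' : j ≤ m <;> simp only [h, h', if_true, if_false] at hij
          · exact hinj i h j h' hij
          · exact absurd hij (hne i h)
          · exact absurd hij.symm (hne j h')
          · omega
        · intro i hi
          by_cases h : i + 1 ≤ m
          · have h' : i ≤ m := by omega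
            simpa [h, h'] using hblue i (by omega)
          · have h' : i = m := by omega
            subst h'
            simpa using hwB
      · left
        push Not at hex
        refine ⟨f m, hfU m le_rfl, U \ P, Finset.sdiff_subset, ?_, ?_, ?_⟩
        · have h1 : P.card ≤ m + 1 := by
            have := Finset.card_image_le (s := Finset.range (m + 1)) (f := f)
            simpa using this
          have h2 := Finset.le_card_sdiff P U
          omega
        · intro hm
          exact (Finset.mem_sdiff.1 hm).2
            (Finset.mem_image.2 ⟨m, Finset.mem_range.2 (by omega), rfl⟩)
        · intro w hw
          obtain ⟨hwU, hwP⟩ := Finset.mem_sdiff.1 hw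
          have hne : f m ≠ w := by
            rintro rfl
            exact hwP (Finset.mem_image.2 ⟨m, Finset.mem_range.2 (by omega), rfl⟩)
          rcases hcol _ (hfU m le_rfl) _ hwU hne with h | h
          · exact h
          · exact absurd h (hex w hwU hwP)

lemma path_copy (k : ℕ) (hk : 0 < k) (B : Set (Sym2 ℕ)) (f : ℕ → ℕ)
    (hinj : ∀ i ≤ k - 1, ∀ j ≤ k - 1, f i = f j → i = j)
    (hblue : ∀ i < k - 1, s(f i, f (i + 1)) ∈ B) : HasCopy (pathGraph k) B := by
  refine ⟨fun i => f i, ?_, ?_⟩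
  · intro i j hij
    exact Fin.ext (hinj _ (by omega) _ (by omega) hij)
  · intro a b hab
    rw [pathGraph_adj] at hab
    rcases hab with h | h
    · have := hblue a (by omega)
      rwa [h] at this
    · have := hblue b (by omega)
      rw [h] at this
      rwa [Sym2.eq_swap]

lemma ramsey (k : ℕ) (hk : 0 < k) (R B : Set (Sym2 ℕ))
    (hcol : ∀ x ∈ Finset.range (2 * k + 2), ∀ y ∈ Finset.range (2 * k + 2), x ≠ y →
      s(x, y) ∈ R ∨ s(x, y) ∈ B) :
    HasCopy (cycleGraph 4) R ∨ HasCopy (pathGraph k) B := by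
  rcases long_path R B (Finset.range (2 * k + 2)) ⟨0, by simp⟩ hcol (k - 1) with
    ⟨x, hx, W, hW, hc, hxW, hred⟩ | ⟨f, _, hinj, hblue⟩
  swap
  · exact Or.inr (path_copy k hk B f hinj hblue)
  rw [Finset.card_range] at hc
  have hWne : W.Nonempty := by
    rw [← Finset.card_pos]; omega
  rcases long_path R B W hWne (fun a ha b hb => hcol a (hW ha) b (hW hb)) (k - 1) with
    ⟨y, hy, W', hW', hc', hyW', hred'⟩ | ⟨f, _, hinj, hblue⟩
  swap
  · exact Or.inr (path_copy k hk B f hinj hblue)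
  left
  obtain ⟨p, hp, q, hq, hpq⟩ := Finset.one_lt_card.1 (show 1 < W'.card by omega)
  have hxy : x ≠ y := by rintro rfl; exact hxW hy
  have hxp : x ≠ p := by rintro rfl; exact hxW (hW' hp)
  have hxq : x ≠ q := by rintro rfl; exact hxW (hW' hq)
  have hyp : y ≠ p := by rintro rfl; exact hyW' hp
  have hyq : y ≠ q := by rintro rfl; exact hyW' hq
  have e1 := hred p (hW' hp)
  have e2 := hred q (hW' hq)
  have e3 := hred' p hp
  have e4 := hred' q hq
  have e1' : s(p, x) ∈ R := by rwa [Sym2.eq_swap]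
  have e2' : s(q, x) ∈ R := by rwa [Sym2.eq_swap]
  have e3' : s(p, y) ∈ R := by rwa [Sym2.eq_swap]
  have e4' : s(q, y) ∈ R := by rwa [Sym2.eq_swap]
  refine ⟨![x, p, y, q], ?_, ?_⟩
  · intro i j hij
    fin_cases i <;> fin_cases j <;> simp_all
  · intro a b hab
    fin_cases a <;> fin_cases b <;> first
      | exact absurd hab (by decide)
      | assumption

lemma builder_wins (k : ℕ) (hk : 0 < k) :
    ∃ t, BuilderWinsIn (cycleGraph 4) (pathGraph k) ∅ ∅ t := by
  classical
  let E : Finset (Sym2 ℕ) := (Finset.range (2 * k + 2)).sym2.filter (fun e => ¬ e.IsDiag)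
  refine ⟨E.card, builder_all _ _ E (fun e he => (Finset.mem_filter.1 he).2) ?_ _ _ _ E
    (Finset.Subset.refl _) le_rfl (fun e he hn => absurd he hn)⟩
  intro R B h
  refine ramsey k hk R B (fun x hx y hy hxy => h _ ?_)
  refine Finset.mem_filter.2 ⟨Finset.mk_mem_sym2_iff.2 ⟨hx, hy⟩, ?_⟩
  simpa using hxy

end C4Path

/-- For `k = 6` and `k = 7` we have `ř(C₄, Pₖ) ≥ 2 * k - 1`; equivalently, Painter has
a strategy surviving `2 * k - 2` rounds without creating a red `C₄` or a blue `Pₖ`,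
i.e. Builder cannot force a win from the empty position within `2 * k - 2` rounds. -/
theorem onlineRamsey_C4_path_lower_six_seven (k : ℕ) (hk : k = 6 ∨ k = 7) :
    2 * k - 1 ≤ onlineRamsey (cycleGraph 4) (pathGraph k) ∧
      ¬ BuilderWinsIn (cycleGraph 4) (pathGraph k) ∅ ∅ (2 * k - 2) := by
  have hs : C4Path.search k (k - 1) 0 [] = true := by
    rcases hk with rfl | rfl
    · exact C4Path.search_six
    · exact C4Path.search_seven
  refine ⟨?_, C4Path.not_win k hs _ le_rfl⟩
  have hmem : onlineRamsey (cycleGraph 4) (pathGraph k) ∈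
      {t | BuilderWinsIn (cycleGraph 4) (pathGraph k) ∅ ∅ t} :=
    Nat.sInf_mem (C4Path.builder_wins k (by omega))
  by_contra hlt
  exact C4Path.not_win k hs _ (by omega) hmem
end

section
/- For every integer k ≥ 8, the online size Ramsey number of the 4-cycle versus the path on k vertices satisfies ř(C₄,P_k) ≥ 2k − 2; equivalently, Painter has a strategy surviving 2k − 3 rounds without creating a red C₄ or a blue P_k. -/
open SimpleGraph

/-- In any graph, a finite set of `k` vertices reachable from a common root forces at least
`k - 1` edges: send each vertex to the edge towards its parent. -/
theorem card_le_of_reachable {R : Set (Sym2 ℕ)} (hR : R.Finite) (u : ℕ) (S : Finset ℕ)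
    (hu : u ∉ S) (hS : ∀ v ∈ S, (fromEdgeSet R).Reachable u v) : S.card ≤ R.ncard := by
  have key : ∀ v ∈ S, ∃ w, (fromEdgeSet R).Adj v w ∧
      (fromEdgeSet R).dist w u < (fromEdgeSet R).dist v u := by
    intro v hv
    obtain ⟨p, hp⟩ := (hS v hv).symm.exists_walk_length_eq_dist
    cases p with
    | nil => exact absurd hv hu
    | cons h q =>
      refine ⟨_, h, ?_⟩
      have := dist_le q
      simp only [Walk.length_cons] at hp
      omega
  choose! n hn1 hn2 using key
  rw [Set.ncard_eq_toFinset_card R hR]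
  refine Finset.card_le_card_of_injOn (fun v => s(v, n v)) ?_ ?_
  · intro v hv
    have := hn1 v hv
    rw [fromEdgeSet_adj] at this
    simpa using this.1
  · intro v hv w hw h
    simp only [Sym2.eq_iff] at h
    rcases h with h | ⟨h1, h2⟩
    · exact h.1
    · have a := hn2 v hv
      have b := hn2 w hw
      rw [h2] at a
      rw [← h1] at b
      omega

theorem path_blue_card {B : Set (Sym2 ℕ)} (hB : B.Finite) (m : ℕ) (f : Fin (m + 1) → ℕ)
    (hf : Function.Injective f)
    (h : ∀ a b, (pathGraph (m + 1)).Adj a b → s(f a, f b) ∈ B) : m ≤ B.ncard := by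
  rw [Set.ncard_eq_toFinset_card B hB]
  have := Finset.card_le_card_of_injOn (s := (Finset.univ : Finset (Fin m)))
    (t := hB.toFinset) (fun i => s(f i.castSucc, f i.succ)) ?_ ?_
  · simpa using this
  · intro i _
    have : s(f i.castSucc, f i.succ) ∈ B := h _ _ (by simp [pathGraph_adj])
    simpa using this
  · intro i _ j _ hij
    simp only [Sym2.eq_iff, hf.eq_iff, Fin.ext_iff, Fin.val_castSucc, Fin.val_succ] at hij
    apply Fin.ext
    omega

theorem path_reach {R B : Set (Sym2 ℕ)}
    (hRB : ∀ a b, s(a, b) ∈ B → (fromEdgeSet R).Reachable a b) (m : ℕ) (f : Fin (m + 1) → ℕ)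
    (h : ∀ a b, (pathGraph (m + 1)).Adj a b → s(f a, f b) ∈ B) (i : Fin (m + 1)) :
    (fromEdgeSet R).Reachable (f 0) (f i) := by
  induction i using Fin.induction with
  | zero => exact Reachable.refl _
  | succ i ih => exact ih.trans (hRB _ _ (h _ _ (by simp [pathGraph_adj])))

theorem path_red_card {R B : Set (Sym2 ℕ)} (hR : R.Finite)
    (hRB : ∀ a b, s(a, b) ∈ B → (fromEdgeSet R).Reachable a b) (m : ℕ) (f : Fin (m + 1) → ℕ)
    (hf : Function.Injective f)
    (h : ∀ a b, (pathGraph (m + 1)).Adj a b → s(f a, f b) ∈ B) : m ≤ R.ncard := by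
  have := card_le_of_reachable hR (f 0)
    ((Finset.univ : Finset (Fin m)).map ⟨fun i => f i.succ, fun i j hij => by
      simpa using hf hij⟩) ?_ ?_
  · simpa using this
  · simp only [Finset.mem_map, Finset.mem_univ, true_and, not_exists]
    intro i hi
    exact Fin.succ_ne_zero i (hf hi)
  · intro v hv
    simp only [Finset.mem_map, Finset.mem_univ, true_and] at hv
    obtain ⟨i, rfl⟩ := hv
    exact path_reach hRB m f h i.succ

theorem no_red_C4 {R : Set (Sym2 ℕ)} (hR : (fromEdgeSet R).IsAcyclic) :
    ¬ HasCopy (cycleGraph 4) R := by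
  rintro ⟨f, hf, h⟩
  have adj : ∀ a b, (cycleGraph 4).Adj a b → (fromEdgeSet R).Adj (f a) (f b) := fun a b hab =>
    (fromEdgeSet_adj _).2 ⟨h a b hab, hf.ne hab.ne⟩
  have h01 := adj 0 1 (by decide)
  have h12 := adj 1 2 (by decide)
  have h23 := adj 2 3 (by decide)
  have h30 := adj 3 0 (by decide)
  have n01 := h01.ne
  have n12 := h12.ne
  have n23 := h23.ne
  have n30 := h30.ne
  have n02 : f 0 ≠ f 2 := hf.ne (by decide)
  have n13 : f 1 ≠ f 3 := hf.ne (by decide)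
  refine hR (Walk.cons h01 (Walk.cons h12 (Walk.cons h23 (Walk.cons h30 Walk.nil)))) ?_
  rw [Walk.cons_isCycle_iff]
  constructor
  · simp [Walk.cons_isPath_iff, n01.symm, n12, n23, n30, n02.symm, n13]
  · simp [n01, n12, n30.symm, n02, n13, n01.symm]

/-- Painter colours red exactly when the red graph stays a forest. -/
theorem painter_survives (m : ℕ) (r : ℕ) : ∀ R B : Set (Sym2 ℕ), R.Finite → B.Finite →
    (fromEdgeSet R).IsAcyclic → (∀ a b, s(a, b) ∈ B → (fromEdgeSet R).Reachable a b) →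
    R.ncard + B.ncard + r < 2 * m →
    ¬ BuilderWinsIn (cycleGraph 4) (pathGraph (m + 1)) R B r := by
  have hno : ∀ R B : Set (Sym2 ℕ), R.Finite → B.Finite →
      (fromEdgeSet R).IsAcyclic → (∀ a b, s(a, b) ∈ B → (fromEdgeSet R).Reachable a b) →
      R.ncard + B.ncard < 2 * m →
      ¬ HasCopy (cycleGraph 4) R ∧ ¬ HasCopy (pathGraph (m + 1)) B := by
    intro R B hR hB hA hRB hc
    refine ⟨no_red_C4 hA, ?_⟩
    rintro ⟨f, hf, h⟩
    have := path_blue_card hB m f hf h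
    have := path_red_card hR hRB m f hf h
    omega
  induction r with
  | zero =>
    intro R B hR hB hA hRB hc
    have := hno R B hR hB hA hRB (by omega)
    simp only [BuilderWinsIn]
    tauto
  | succ r ih =>
    intro R B hR hB hA hRB hc
    have ho := hno R B hR hB hA hRB (by omega)
    simp only [BuilderWinsIn]
    rintro (h | h | ⟨e, hd, heR, heB, h1, h2⟩)
    · exact ho.1 h
    · exact ho.2 h
    induction e using Sym2.ind with
    | _ x y =>
    by_cases hxy : (fromEdgeSet R).Reachable x y
    · refine ih R (insert s(x, y) B) hR (hB.insert _) hA ?_ ?_ h2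
      · intro a b hab
        rcases hab with hab | hab
        · rcases Sym2.eq_iff.1 hab with ⟨rfl, rfl⟩ | ⟨rfl, rfl⟩
          · exact hxy
          · exact hxy.symm
        · exact hRB a b hab
      · rw [Set.ncard_insert_of_notMem heB hB]
        omega
    · have hle : fromEdgeSet R ≤ fromEdgeSet (insert s(x, y) R) :=
        fromEdgeSet_mono (Set.subset_insert _ _)
      refine ih (insert s(x, y) R) B (hR.insert _) hB ?_
        (fun a b hab => (hRB a b hab).mono hle) ?_ h1
      · have : fromEdgeSet (insert s(x, y) R) = fromEdgeSet R ⊔ edge x y := by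
          ext a b; simp [edge, fromEdgeSet_adj]; tauto
        rw [this]
        exact (isAcyclic_sup_fromEdgeSet_iff).2 ⟨hA, fun h => absurd h hxy⟩
      · rw [Set.ncard_insert_of_notMem heR hR]
        omega

/-- Finite Ramsey theorem for two colours. -/
theorem ramsey_two (s : ℕ) : ∀ t : ℕ, ∃ N : ℕ, ∀ (c : ℕ → ℕ → Prop), (∀ a b, c a b → c b a) →
    ∀ S : Finset ℕ, N ≤ S.card →
      (∃ T ⊆ S, T.card = s ∧ ∀ a ∈ T, ∀ b ∈ T, a ≠ b → c a b) ∨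
      (∃ T ⊆ S, T.card = t ∧ ∀ a ∈ T, ∀ b ∈ T, a ≠ b → ¬ c a b) := by
  classical
  induction s with
  | zero => exact fun t => ⟨0, fun c _ S _ => Or.inl ⟨∅, by simp⟩⟩
  | succ s ihs =>
    intro t
    induction t with
    | zero => exact ⟨0, fun c _ S _ => Or.inr ⟨∅, by simp⟩⟩
    | succ t iht =>
      obtain ⟨N1, h1⟩ := ihs (t + 1)
      obtain ⟨N2, h2⟩ := iht
      refine ⟨N1 + N2 + 1, fun c hc S hS => ?_⟩
      have hne : S.Nonempty := Finset.card_pos.1 (by omega)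
      obtain ⟨v, hv⟩ := hne
      have hsum := Finset.card_filter_add_card_filter_not (s := S.erase v) (fun w => c v w)
      rw [Finset.card_erase_of_mem hv] at hsum
      have hsub : ∀ (p : ℕ → Prop) [DecidablePred p], (S.erase v).filter p ⊆ S := fun p _ =>
        (Finset.filter_subset _ _).trans (Finset.erase_subset _ _)
      by_cases hcard : N1 ≤ ((S.erase v).filter (fun w => c v w)).card
      · rcases h1 c hc _ hcard with ⟨T, hT, hTc, hTT⟩ | ⟨T, hT, hTc, hTT⟩
        · left
          have hvT : v ∉ T := fun h => by simpa using hT h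
          have hTv : ∀ w ∈ T, c v w := fun w hw => (Finset.mem_filter.1 (hT hw)).2
          refine ⟨insert v T, Finset.insert_subset hv (hT.trans (hsub _)),
            by rw [Finset.card_insert_of_notMem hvT, hTc], ?_⟩
          intro a ha b hb hab
          rcases Finset.mem_insert.1 ha with rfl | ha' <;>
            rcases Finset.mem_insert.1 hb with rfl | hb'
          · exact absurd rfl hab
          · exact hTv b hb'
          · exact hc _ _ (hTv a ha')
          · exact hTT a ha' b hb' hab
        · exact Or.inr ⟨T, hT.trans (hsub _), hTc, hTT⟩
      · rcases h2 c hc ((S.erase v).filter (fun w => ¬ c v w)) (by omega) with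
          ⟨T, hT, hTc, hTT⟩ | ⟨T, hT, hTc, hTT⟩
        · exact Or.inl ⟨T, hT.trans (hsub _), hTc, hTT⟩
        · right
          have hvT : v ∉ T := fun h => by simpa using hT h
          have hTv : ∀ w ∈ T, ¬ c v w := fun w hw => (Finset.mem_filter.1 (hT hw)).2
          refine ⟨insert v T, Finset.insert_subset hv (hT.trans (hsub _)),
            by rw [Finset.card_insert_of_notMem hvT, hTc], ?_⟩
          intro a ha b hb hab
          rcases Finset.mem_insert.1 ha with rfl | ha' <;>
            rcases Finset.mem_insert.1 hb with rfl | hb'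
          · exact absurd rfl hab
          · exact hTv b hb'
          · exact fun h => hTv a ha' (hc _ _ h)
          · exact hTT a ha' b hb' hab

/-- Builder may simply play all edges of a finite set. -/
theorem builder_plays_all {V W : Type*} (G : SimpleGraph V) (H : SimpleGraph W)
    (E : Finset (Sym2 ℕ)) : ∀ R B : Set (Sym2 ℕ), (∀ e ∈ E, ¬ e.IsDiag ∧ e ∉ R ∧ e ∉ B) →
    (∀ R' B' : Set (Sym2 ℕ), R ⊆ R' → B ⊆ B' → (∀ e ∈ E, e ∈ R' ∨ e ∈ B') →
      HasCopy G R' ∨ HasCopy H B') → BuilderWinsIn G H R B E.card := by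
  classical
  induction E using Finset.induction_on with
  | empty =>
    intro R B _ h
    simpa [BuilderWinsIn] using h R B subset_rfl subset_rfl (by simp)
  | insert e E he ih =>
    intro R B hE h
    rw [Finset.card_insert_of_notMem he]
    simp only [BuilderWinsIn]
    obtain ⟨hd, hR, hB⟩ := hE e (Finset.mem_insert_self _ _)
    refine Or.inr (Or.inr ⟨e, hd, hR, hB, ih _ _ ?_ ?_, ih _ _ ?_ ?_⟩)
    · intro x hx
      obtain ⟨h1, h2, h3⟩ := hE x (Finset.mem_insert_of_mem hx)
      refine ⟨h1, ?_, h3⟩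
      rintro (rfl | h4)
      · exact he hx
      · exact h2 h4
    · intro R' B' hR' hB' hx
      refine h R' B' ((Set.subset_insert _ _).trans hR') hB' ?_
      intro x hxe
      rcases Finset.mem_insert.1 hxe with rfl | hxe
      · exact Or.inl (hR' (Set.mem_insert _ _))
      · exact hx x hxe
    · intro x hx
      obtain ⟨h1, h2, h3⟩ := hE x (Finset.mem_insert_of_mem hx)
      refine ⟨h1, h2, ?_⟩
      rintro (rfl | h4)
      · exact he hx
      · exact h3 h4
    · intro R' B' hR' hB' hx
      refine h R' B' hR' ((Set.subset_insert _ _).trans hB') ?_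
      intro x hxe
      rcases Finset.mem_insert.1 hxe with rfl | hxe
      · exact Or.inr (hB' (Set.mem_insert _ _))
      · exact hx x hxe

theorem hasCopy_of_clique {n : ℕ} (G : SimpleGraph (Fin n)) (S : Set (Sym2 ℕ)) (T : Finset ℕ)
    (hT : T.card = n) (h : ∀ a ∈ T, ∀ b ∈ T, a ≠ b → s(a, b) ∈ S) : HasCopy G S :=
  ⟨T.orderEmbOfFin hT, (T.orderEmbOfFin hT).injective, fun a b hab =>
    h _ (T.orderEmbOfFin_mem hT a) _ (T.orderEmbOfFin_mem hT b)
      ((T.orderEmbOfFin hT).injective.ne hab.ne)⟩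

theorem builder_wins_eventually {m n : ℕ} (G : SimpleGraph (Fin m)) (H : SimpleGraph (Fin n)) :
    ∃ t, BuilderWinsIn G H ∅ ∅ t := by
  classical
  obtain ⟨N, hN⟩ := ramsey_two m n
  refine ⟨_, builder_plays_all G H
    ((Finset.range N).sym2.filter (fun e => ¬ e.IsDiag)) ∅ ∅ ?_ ?_⟩
  · intro e he
    exact ⟨(Finset.mem_filter.1 he).2, by simp, by simp⟩
  · intro R' B' _ _ hcov
    rcases hN (fun a b => s(a, b) ∈ R') (fun a b h => by rwa [Sym2.eq_swap])
      (Finset.range N) (by simp) with ⟨T, hT, hTc, hTT⟩ | ⟨T, hT, hTc, hTT⟩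
    · exact Or.inl (hasCopy_of_clique G R' T hTc hTT)
    · refine Or.inr (hasCopy_of_clique H B' T hTc ?_)
      intro a ha b hb hab
      refine (hcov s(a, b) ?_).resolve_left (hTT a ha b hb hab)
      refine Finset.mem_filter.2 ⟨Finset.mk_mem_sym2_iff.2 ⟨hT ha, hT hb⟩, ?_⟩
      simpa using hab

/-- For every integer `k ≥ 8` we have `ř(C₄, Pₖ) ≥ 2 * k - 2`; equivalently, Painter has
a strategy surviving `2 * k - 3` rounds without creating a red `C₄` or a blue `Pₖ`,
i.e. Builder cannot force a win from the empty position within `2 * k - 3` rounds. -/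
theorem onlineRamsey_C4_path_lower (k : ℕ) (hk : 8 ≤ k) :
    2 * k - 2 ≤ onlineRamsey (cycleGraph 4) (pathGraph k) ∧
      ¬ BuilderWinsIn (cycleGraph 4) (pathGraph k) ∅ ∅ (2 * k - 3) := by
  obtain ⟨m, rfl⟩ : ∃ m, k = m + 1 := ⟨k - 1, by omega⟩
  have key : ∀ t, t < 2 * m → ¬ BuilderWinsIn (cycleGraph 4) (pathGraph (m + 1)) ∅ ∅ t := by
    intro t ht
    refine painter_survives m t ∅ ∅ Set.finite_empty Set.finite_empty ?_ (by simp) (by simpa using ht)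
    rw [fromEdgeSet_empty]
    exact isAcyclic_bot
  refine ⟨?_, key _ (by omega)⟩
  have hmem : onlineRamsey (cycleGraph 4) (pathGraph (m + 1)) ∈
      {t | BuilderWinsIn (cycleGraph 4) (pathGraph (m + 1)) ∅ ∅ t} :=
    Nat.sInf_mem (builder_wins_eventually (cycleGraph 4) (pathGraph (m + 1)))
  by_contra hlt
  exact key _ (by omega) hmem
end

section
/- In the online Ramsey game with targets red C₄ and blue P₆, consider the position in which the five edges v₁v₂, v₂v₃, v₃v₄, v₄v₅, v₅v₆ of a path on six distinct vertices have been colored blue, blue, blue, red, red respectively (case B4). From this position Builder can force a red copy of C₄ or a blue copy of P₆ within at most 6 additional rounds, so within at most 11 rounds in total. -/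
open SimpleGraph

namespace CaseB4

/-- Builder strategy trees: claim a red `C₄`, claim a blue `P₆`, or choose an edge and
continue according to Painter's answer (red first, then blue). -/
inductive Strat where
  | red (a b c d : ℕ)
  | blue (a b c d e f : ℕ)
  | move (a b : ℕ) (tR tB : Strat)

/-- Membership of an unordered pair in a list of pairs. -/
def mem (a b : ℕ) (l : List (ℕ × ℕ)) : Bool :=
  l.contains (a, b) || l.contains (b, a)

/-- Checks that a strategy tree wins within `r` rounds from the given position. -/
def check : Strat → List (ℕ × ℕ) → List (ℕ × ℕ) → ℕ → Bool
  | .red a b c d, R, _, _ =>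
      decide [a, b, c, d].Nodup && mem a b R && mem b c R && mem c d R && mem d a R
  | .blue a b c d e f, _, B, _ =>
      decide [a, b, c, d, e, f].Nodup && mem a b B && mem b c B && mem c d B && mem d e B
        && mem e f B
  | .move _ _ _ _, _, _, 0 => false
  | .move a b tR tB, R, B, r + 1 =>
      decide (a ≠ b) && !mem a b R && !mem a b B && check tR ((a, b) :: R) B r
        && check tB R ((a, b) :: B) r

/-- The edge set described by a list of index pairs. -/
def edges (w : ℕ → ℕ) (l : List (ℕ × ℕ)) : Set (Sym2 ℕ) :=
  {e | ∃ p ∈ l, e = s(w p.1, w p.2)}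

lemma edges_cons (w : ℕ → ℕ) (a b : ℕ) (l : List (ℕ × ℕ)) :
    edges w ((a, b) :: l) = insert s(w a, w b) (edges w l) := by
  ext e
  simp [edges]

lemma mem_edges {w : ℕ → ℕ} (hw : Function.Injective w) (a b : ℕ) (l : List (ℕ × ℕ)) :
    s(w a, w b) ∈ edges w l ↔ mem a b l = true := by
  simp only [edges, mem, Set.mem_ofPred_eq, Bool.or_eq_true, List.contains_iff_mem,
    Sym2.eq_iff, hw.eq_iff]
  constructor
  · rintro ⟨⟨x, y⟩, hp, ⟨rfl, rfl⟩ | ⟨rfl, rfl⟩⟩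
    · exact Or.inl hp
    · exact Or.inr hp
  · rintro (h | h)
    · exact ⟨_, h, by simp⟩
    · exact ⟨_, h, by simp⟩

lemma win_red {V W : Type*} {G : SimpleGraph V} {H : SimpleGraph W} {R B : Set (Sym2 ℕ)}
    (h : HasCopy G R) (r : ℕ) : BuilderWinsIn G H R B r := by
  cases r <;> exact Or.inl h

lemma win_blue {V W : Type*} {G : SimpleGraph V} {H : SimpleGraph W} {R B : Set (Sym2 ℕ)}
    (h : HasCopy H B) (r : ℕ) : BuilderWinsIn G H R B r := by
  cases r
  · exact Or.inr h
  · exact Or.inr (Or.inl h)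

lemma hasCopy_cycle {w : ℕ → ℕ} (hw : Function.Injective w) {a b c d : ℕ}
    {S : Set (Sym2 ℕ)} (hn : [a, b, c, d].Nodup) (h1 : s(w a, w b) ∈ S)
    (h2 : s(w b, w c) ∈ S) (h3 : s(w c, w d) ∈ S) (h4 : s(w d, w a) ∈ S) :
    HasCopy (cycleGraph 4) S := by
  refine ⟨fun i => w ([a, b, c, d].get i), hw.comp (List.nodup_iff_injective_get.1 hn), ?_⟩
  have h1' := h1
  have h2' := h2
  have h3' := h3
  have h4' := h4
  rw [Sym2.eq_swap] at h1' h2' h3' h4'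
  intro i j hij
  rw [cycleGraph_adj] at hij
  fin_cases i <;> fin_cases j <;> first | assumption | exact absurd hij (by decide)

lemma hasCopy_path {w : ℕ → ℕ} (hw : Function.Injective w) {a b c d e f : ℕ}
    {S : Set (Sym2 ℕ)} (hn : [a, b, c, d, e, f].Nodup) (h1 : s(w a, w b) ∈ S)
    (h2 : s(w b, w c) ∈ S) (h3 : s(w c, w d) ∈ S) (h4 : s(w d, w e) ∈ S)
    (h5 : s(w e, w f) ∈ S) :
    HasCopy (pathGraph 6) S := by
  refine ⟨fun i => w ([a, b, c, d, e, f].get i),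
    hw.comp (List.nodup_iff_injective_get.1 hn), ?_⟩
  have h1' := h1
  have h2' := h2
  have h3' := h3
  have h4' := h4
  have h5' := h5
  rw [Sym2.eq_swap] at h1' h2' h3' h4' h5'
  intro i j hij
  rw [pathGraph_adj] at hij
  fin_cases i <;> fin_cases j <;> first | assumption | exact absurd hij (by decide)

theorem check_sound {w : ℕ → ℕ} (hw : Function.Injective w) (t : Strat) :
    ∀ (R B : List (ℕ × ℕ)) (r : ℕ), check t R B r = true →
      BuilderWinsIn (cycleGraph 4) (pathGraph 6) (edges w R) (edges w B) r := by
  induction t with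
  | red a b c d =>
    intro R B r h
    simp only [check, Bool.and_eq_true, decide_eq_true_eq, ← mem_edges hw] at h
    obtain ⟨⟨⟨⟨hn, h1⟩, h2⟩, h3⟩, h4⟩ := h
    exact win_red (hasCopy_cycle hw hn h1 h2 h3 h4) r
  | blue a b c d e f =>
    intro R B r h
    simp only [check, Bool.and_eq_true, decide_eq_true_eq, ← mem_edges hw] at h
    obtain ⟨⟨⟨⟨⟨hn, h1⟩, h2⟩, h3⟩, h4⟩, h5⟩ := h
    exact win_blue (hasCopy_path hw hn h1 h2 h3 h4 h5) r
  | move a b tR tB ihR ihB =>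
    intro R B r h
    cases r with
    | zero => simp [check] at h
    | succ r =>
      simp only [check, Bool.and_eq_true, decide_eq_true_eq, Bool.not_eq_true',
        ← Bool.not_eq_true, ← mem_edges hw] at h
      obtain ⟨⟨⟨⟨hab, h1⟩, h2⟩, h3⟩, h4⟩ := h
      refine Or.inr (Or.inr ⟨s(w a, w b), ?_, h1, h2, ?_, ?_⟩)
      · simpa [hw.eq_iff] using hab
      · rw [← edges_cons]
        exact ihR _ _ _ h3
      · rw [← edges_cons]
        exact ihB _ _ _ h4

/-- Builder's winning strategy; index `6` is a fresh vertex. -/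
def strategy : Strat :=
  (.move 0 4
    (.move 0 5
      (.move 0 6
        (.move 3 5
          (.red 0 4 3 5)
          (.move 5 6
            (.red 0 4 5 6)
            (.blue 0 1 2 3 5 6)))
        (.move 3 5
          (.red 0 4 3 5)
          (.blue 5 3 2 1 0 6)))
      (.move 3 6
        (.move 5 6
          (.red 3 4 5 6)
          (.blue 3 2 1 0 5 6))
        (.blue 5 0 1 2 3 6)))
    (.move 3 5
      (.move 3 6
        (.move 4 6
          (.red 3 5 4 6)
          (.blue 3 2 1 0 4 6))
        (.blue 4 0 1 2 3 6))
      (.blue 4 0 1 2 3 5)))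

/-- Extend the six given vertices to an injective enumeration of vertices. -/
def ext (v : Fin 6 → ℕ) (n : ℕ) : ℕ :=
  if h : n < 6 then v ⟨n, h⟩ else (∑ i, v i) + n

lemma ext_injective {v : Fin 6 → ℕ} (hv : Function.Injective v) :
    Function.Injective (ext v) := by
  have hle : ∀ i, v i ≤ ∑ i, v i := fun i =>
    Finset.single_le_sum (f := v) (fun _ _ => Nat.zero_le _) (Finset.mem_univ i)
  intro m n h
  unfold ext at h
  split_ifs at h with h1 h2 h2
  · simpa using hv h
  · have := hle ⟨m, h1⟩
    omega
  · have := hle ⟨n, h2⟩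
    omega
  · omega

end CaseB4

/-- Case `B4`: in the online Ramsey game with targets red `C₄` and blue `P₆`,
from the position in which the five edges `v₁v₂, v₂v₃, v₃v₄, v₄v₅, v₅v₆` of a path on
six distinct vertices have been colored blue, blue, blue, red, red respectively,
Builder can force a red copy of `C₄` or a blue copy of `P₆` within at most 6 additional
rounds (so within at most 11 rounds in total). -/
theorem builder_wins_case_B4 (v : Fin 6 → ℕ) (hv : Function.Injective v) :
    BuilderWinsIn (cycleGraph 4) (pathGraph 6)
      {s(v 3, v 4), s(v 4, v 5)}
      {s(v 0, v 1), s(v 1, v 2), s(v 2, v 3)} 6 := by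
  have key := CaseB4.check_sound (CaseB4.ext_injective hv) CaseB4.strategy
    [(3, 4), (4, 5)] [(0, 1), (1, 2), (2, 3)] 6 (by decide)
  have e0 : CaseB4.edges (CaseB4.ext v) [] = ∅ := by
    simp [CaseB4.edges]
  simp only [CaseB4.edges_cons, e0, insert_empty_eq] at key
  exact key
end

section
/- In the online Ramsey game with targets red C₄ and blue P₆, consider the position in which the five edges v₁v₂, v₂v₃, v₃v₄, v₄v₅, v₅v₆ of a path on six distinct vertices have been colored blue, blue, red, blue, red respectively (case B6). From this position Builder can force a red copy of C₄ or a blue copy of P₆ within at most 6 additional rounds, so within at most 11 rounds in total. -/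
open SimpleGraph

/-- A Builder strategy on seven vertices: at a leaf a monochromatic target is exhibited,
at a node Builder plays an edge and continues in the first (second) subtree if it is
colored red (blue). -/
inductive Strat_s7 where
  | red (f : Fin 4 → Fin 7)
  | blue (f : Fin 6 → Fin 7)
  | play (a b : Fin 7) (l r : Strat_s7)

/-- Validity of a strategy from a given position within a given number of rounds. -/
def Strat_s7.check : Strat_s7 → List (Sym2 (Fin 7)) → List (Sym2 (Fin 7)) → ℕ → Bool
  | .red f, R, _, _ => decide (Function.Injective f) && decide (∀ i, s(f i, f (i + 1)) ∈ R)
  | .blue f, _, B, _ => decide (Function.Injective f) &&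
      decide (∀ i : Fin 5, s(f i.castSucc, f i.succ) ∈ B)
  | .play _ _ _ _, _, _, 0 => false
  | .play a b l r, R, B, n + 1 =>
      decide (a ≠ b) && decide (s(a, b) ∉ R) && decide (s(a, b) ∉ B) &&
        l.check (s(a, b) :: R) B n && r.check R (s(a, b) :: B) n

/-- The set of edges on `ℕ` corresponding to a list of edges on `Fin 7`. -/
def edgeImage (w : Fin 7 → ℕ) (R : List (Sym2 (Fin 7))) : Set (Sym2 ℕ) :=
  {e | ∃ p ∈ R, Sym2.map w p = e}

theorem edgeImage_cons (w : Fin 7 → ℕ) (p : Sym2 (Fin 7)) (R : List (Sym2 (Fin 7))) :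
    edgeImage w (p :: R) = insert (Sym2.map w p) (edgeImage w R) := by
  ext e
  simp [edgeImage, eq_comm]

theorem not_mem_edgeImage {w : Fin 7 → ℕ} (hw : Function.Injective w) {p : Sym2 (Fin 7)}
    {R : List (Sym2 (Fin 7))} (h : p ∉ R) : Sym2.map w p ∉ edgeImage w R := by
  rintro ⟨q, hq, hqp⟩
  exact h (Sym2.map.injective hw hqp ▸ hq)

theorem winsIn_of_copy {R B : Set (Sym2 ℕ)}
    (h : HasCopy (cycleGraph 4) R ∨ HasCopy (pathGraph 6) B) (n : ℕ) :
    BuilderWinsIn (cycleGraph 4) (pathGraph 6) R B n := by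
  cases n with
  | zero => exact h
  | succ n => exact h.elim Or.inl (fun h => Or.inr (Or.inl h))

theorem Strat_s7.sound {w : Fin 7 → ℕ} (hw : Function.Injective w) (t : Strat_s7) :
    ∀ (R B : List (Sym2 (Fin 7))) (n : ℕ), t.check R B n = true →
      BuilderWinsIn (cycleGraph 4) (pathGraph 6) (edgeImage w R) (edgeImage w B) n := by
  induction t with
  | red f =>
    intro R B n h
    simp only [Strat_s7.check, Bool.and_eq_true, decide_eq_true_eq] at h
    obtain ⟨hf, h⟩ := h
    refine winsIn_of_copy (Or.inl ⟨w ∘ f, hw.comp hf, fun a b hab => ?_⟩) n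
    have key : b = a + 1 ∨ a = b + 1 := by
      revert a b
      simp only [cycleGraph_adj]
      decide
    rcases key with rfl | rfl
    · exact ⟨_, h a, rfl⟩
    · exact ⟨_, h b, Sym2.eq_swap⟩
  | blue f =>
    intro R B n h
    simp only [Strat_s7.check, Bool.and_eq_true, decide_eq_true_eq] at h
    obtain ⟨hf, h⟩ := h
    refine winsIn_of_copy (Or.inr ⟨w ∘ f, hw.comp hf, fun a b hab => ?_⟩) n
    have key : (∃ i : Fin 5, a = i.castSucc ∧ b = i.succ) ∨
        (∃ i : Fin 5, b = i.castSucc ∧ a = i.succ) := by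
      revert a b
      simp only [pathGraph_adj]
      decide
    rcases key with ⟨i, rfl, rfl⟩ | ⟨i, rfl, rfl⟩
    · exact ⟨_, h i, rfl⟩
    · exact ⟨_, h i, Sym2.eq_swap⟩
  | play a b l r ihl ihr =>
    intro R B n h
    cases n with
    | zero => simp [Strat_s7.check] at h
    | succ n =>
      simp only [Strat_s7.check, Bool.and_eq_true, decide_eq_true_eq] at h
      obtain ⟨⟨⟨⟨hab, hR⟩, hB⟩, hl⟩, hr⟩ := h
      refine Or.inr (Or.inr ⟨Sym2.map w s(a, b), ?_, not_mem_edgeImage hw hR,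
        not_mem_edgeImage hw hB, ?_, ?_⟩)
      · simpa using fun h => hab (hw h)
      · rw [← edgeImage_cons]
        exact ihl _ _ _ hl
      · rw [← edgeImage_cons]
        exact ihr _ _ _ hr

/-- Builder's winning strategy in case `B6`. -/
def stratB6 : Strat_s7 :=
  (.play 0 2
   (.play 0 3
    (.play 1 3
     (.play 0 4
      (.play 2 4
       (.red ![0, 3, 2, 4])
       (.play 3 5
        (.red ![0, 3, 5, 4])
        (.blue ![0, 1, 2, 4, 3, 5])))
      (.play 2 5
       (.play 3 5
        (.red ![0, 2, 5, 3])
        (.blue ![2, 1, 0, 4, 3, 5]))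
       (.blue ![3, 4, 0, 1, 2, 5])))
     (.play 0 4
      (.play 2 4
       (.red ![0, 3, 2, 4])
       (.play 2 5
        (.red ![0, 2, 5, 4])
        (.blue ![0, 1, 3, 4, 2, 5])))
      (.play 0 5
       (.play 2 5
        (.red ![0, 3, 2, 5])
        (.blue ![0, 4, 3, 1, 2, 5]))
       (.blue ![2, 1, 3, 4, 0, 5]))))
    (.play 1 3
     (.play 2 4
      (.play 0 4
       (.play 2 5
        (.red ![0, 2, 5, 4])
        (.blue ![4, 3, 0, 1, 2, 5]))
       (.play 3 5
        (.red ![2, 3, 5, 4])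
        (.blue ![2, 1, 0, 4, 3, 5])))
      (.play 0 5
       (.play 3 5
        (.red ![0, 2, 3, 5])
        (.blue ![0, 1, 2, 4, 3, 5]))
       (.blue ![1, 2, 4, 3, 0, 5])))
     (.play 0 4
      (.play 1 4
       (.play 2 5
        (.red ![0, 2, 5, 4])
        (.blue ![4, 3, 0, 1, 2, 5]))
       (.play 2 5
        (.red ![0, 2, 5, 4])
        (.blue ![0, 3, 4, 1, 2, 5])))
      (.play 0 5
       (.play 3 5
        (.red ![0, 2, 3, 5])
        (.blue ![2, 1, 0, 4, 3, 5]))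
       (.blue ![2, 1, 3, 4, 0, 5])))))
   (.play 0 3
    (.play 1 3
     (.play 0 4
      (.play 1 4
       (.red ![0, 3, 1, 4])
       (.play 3 5
        (.red ![0, 3, 5, 4])
        (.blue ![0, 2, 1, 4, 3, 5])))
      (.play 1 5
       (.play 2 5
        (.red ![1, 3, 2, 5])
        (.blue ![3, 4, 0, 1, 2, 5]))
       (.blue ![3, 4, 0, 2, 1, 5])))
     (.play 0 4
      (.play 2 4
       (.red ![0, 3, 2, 4])
       (.play 3 5
        (.red ![0, 3, 5, 4])
        (.blue ![0, 1, 2, 4, 3, 5])))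
      (.play 0 5
       (.play 2 5
        (.red ![0, 3, 2, 5])
        (.blue ![0, 4, 3, 1, 2, 5]))
       (.blue ![2, 1, 3, 4, 0, 5]))))
    (.play 1 3
     (.play 0 4
      (.play 1 5
       (.play 2 5
        (.red ![1, 3, 2, 5])
        (.blue ![4, 3, 0, 1, 2, 5]))
       (.blue ![4, 3, 0, 2, 1, 5]))
      (.play 1 5
       (.play 2 5
        (.red ![1, 3, 2, 5])
        (.blue ![3, 4, 0, 1, 2, 5]))
       (.blue ![3, 4, 0, 2, 1, 5])))
     (.play 0 5
      (.play 0 6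
       (.play 4 6
        (.red ![0, 5, 4, 6])
        (.blue ![0, 2, 1, 3, 4, 6]))
       (.blue ![4, 3, 1, 2, 0, 6]))
      (.blue ![4, 3, 1, 2, 0, 5])))))

theorem stratB6_check :
    stratB6.check [s(2, 3), s(4, 5)] [s(0, 1), s(1, 2), s(3, 4)] 6 = true := by
  decide +kernel

/-- Case `B6`: in the online Ramsey game with targets red `C₄` and blue `P₆`,
from the position in which the five edges `v₁v₂, v₂v₃, v₃v₄, v₄v₅, v₅v₆` of a path on
six distinct vertices have been colored blue, blue, red, blue, red respectively,
Builder can force a red copy of `C₄` or a blue copy of `P₆` within at most 6 additional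
rounds (so within at most 11 rounds in total). -/
theorem builder_wins_case_B6 (v : Fin 6 → ℕ) (hv : Function.Injective v) :
    BuilderWinsIn (cycleGraph 4) (pathGraph 6)
      {s(v 2, v 3), s(v 4, v 5)}
      {s(v 0, v 1), s(v 1, v 2), s(v 3, v 4)} 6 := by
  obtain ⟨x, hx⟩ := Infinite.exists_notMem_finset (Finset.univ.image v)
  have hx' : ∀ i, v i ≠ x := fun i h => hx (by simp [← h])
  have hw : Function.Injective (Fin.snoc v x : Fin 7 → ℕ) := by
    rw [Fin.snoc_injective_iff]
    exact ⟨hv, by rintro ⟨i, hi⟩; exact hx' i hi⟩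
  have h := Strat_s7.sound hw stratB6 _ _ _ stratB6_check
  have e0 : (Fin.snoc v x : Fin 7 → ℕ) 0 = v 0 := rfl
  have e1 : (Fin.snoc v x : Fin 7 → ℕ) 1 = v 1 := rfl
  have e2 : (Fin.snoc v x : Fin 7 → ℕ) 2 = v 2 := rfl
  have e3 : (Fin.snoc v x : Fin 7 → ℕ) 3 = v 3 := rfl
  have e4 : (Fin.snoc v x : Fin 7 → ℕ) 4 = v 4 := rfl
  have e5 : (Fin.snoc v x : Fin 7 → ℕ) 5 = v 5 := rfl
  have nil : edgeImage (Fin.snoc v x : Fin 7 → ℕ) [] = ∅ := by simp [edgeImage]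
  simp only [edgeImage_cons, nil, Sym2.map_mk, e0, e1, e2, e3, e4, e5] at h
  simpa using h
end

section
/- In the online Ramsey game with targets red C₄ and blue P₆, consider the position in which the five edges v₁v₂, v₂v₃, v₃v₄, v₄v₅, v₅v₆ of a path on six distinct vertices have all been colored red (case R0). From this position Builder can force a red copy of C₄ or a blue copy of P₆ within at most 6 additional rounds, so within at most 11 rounds in total. -/
open SimpleGraph

lemma hasCopy_cycle (v : Fin 6 → ℕ) (hv : Function.Injective v) (S : Set (Sym2 ℕ))
    (p : Fin 4 → Fin 6) (hp : Function.Injective p)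
    (h0 : s(v (p 0), v (p 1)) ∈ S) (h1 : s(v (p 1), v (p 2)) ∈ S)
    (h2 : s(v (p 2), v (p 3)) ∈ S) (h3 : s(v (p 3), v (p 0)) ∈ S) :
    HasCopy (cycleGraph 4) S := by
  refine ⟨v ∘ p, hv.comp hp, ?_⟩
  have h0' := h0
  have h1' := h1
  have h2' := h2
  have h3' := h3
  rw [Sym2.eq_swap] at h0' h1' h2' h3'
  intro a b hab
  rw [cycleGraph_adj] at hab
  fin_cases a <;> fin_cases b <;> first | assumption | (exfalso; revert hab; decide)

lemma hasCopy_path (v : Fin 6 → ℕ) (hv : Function.Injective v) (S : Set (Sym2 ℕ))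
    (p : Fin 6 → Fin 6) (hp : Function.Injective p)
    (h0 : s(v (p 0), v (p 1)) ∈ S) (h1 : s(v (p 1), v (p 2)) ∈ S)
    (h2 : s(v (p 2), v (p 3)) ∈ S) (h3 : s(v (p 3), v (p 4)) ∈ S)
    (h4 : s(v (p 4), v (p 5)) ∈ S) :
    HasCopy (pathGraph 6) S := by
  refine ⟨v ∘ p, hv.comp hp, ?_⟩
  have h0' := h0
  have h1' := h1
  have h2' := h2
  have h3' := h3
  have h4' := h4
  rw [Sym2.eq_swap] at h0' h1' h2' h3' h4'
  intro a b hab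
  rw [pathGraph_adj] at hab
  fin_cases a <;> fin_cases b <;> first | assumption | (exfalso; revert hab; decide)

lemma wins_of_red {V W : Type*} {G : SimpleGraph V} {H : SimpleGraph W}
    {R B : Set (Sym2 ℕ)} {r : ℕ} (h : HasCopy G R) : BuilderWinsIn G H R B r := by
  cases r with
  | zero => exact Or.inl h
  | succ r => exact Or.inl h

lemma wins_of_blue {V W : Type*} {G : SimpleGraph V} {H : SimpleGraph W}
    {R B : Set (Sym2 ℕ)} {r : ℕ} (h : HasCopy H B) : BuilderWinsIn G H R B r := by
  cases r with
  | zero => exact Or.inr h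
  | succ r => exact Or.inr (Or.inl h)

lemma wins_step {V W : Type*} {G : SimpleGraph V} {H : SimpleGraph W}
    {R B : Set (Sym2 ℕ)} {r : ℕ} (e : Sym2 ℕ) (hd : ¬ e.IsDiag) (hR : e ∉ R) (hB : e ∉ B)
    (h1 : BuilderWinsIn G H (insert e R) B r) (h2 : BuilderWinsIn G H R (insert e B) r) :
    BuilderWinsIn G H R B (r + 1) :=
  Or.inr (Or.inr ⟨e, hd, hR, hB, h1, h2⟩)

/-- Builder's strategy: first play `v₁v₄, v₂v₅, v₃v₆` (all forced blue), then `v₁v₅`.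
If it is red, then `v₁v₃` and `v₂v₄` are forced blue; if it is blue, play `v₂v₆` and, when that
is red, `v₄v₆`, which is forced blue. -/
theorem builder_wins_case_R0 (v : Fin 6 → ℕ) (hv : Function.Injective v) :
    BuilderWinsIn (cycleGraph 4) (pathGraph 6)
      {s(v 0, v 1), s(v 1, v 2), s(v 2, v 3), s(v 3, v 4), s(v 4, v 5)}
      (∅ : Set (Sym2 ℕ)) 6 := by
  refine wins_step s(v 0, v 3) (by simp [hv.eq_iff]) (by simp [hv.eq_iff]) (by simp)
    (wins_of_red (hasCopy_cycle v hv _ ![0, 1, 2, 3] (by decide)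
      (by simp) (by simp) (by simp) (by simp))) ?_
  refine wins_step s(v 1, v 4) (by simp [hv.eq_iff]) (by simp [hv.eq_iff]) (by simp [hv.eq_iff])
    (wins_of_red (hasCopy_cycle v hv _ ![1, 2, 3, 4] (by decide)
      (by simp) (by simp) (by simp) (by simp))) ?_
  refine wins_step s(v 2, v 5) (by simp [hv.eq_iff]) (by simp [hv.eq_iff]) (by simp [hv.eq_iff])
    (wins_of_red (hasCopy_cycle v hv _ ![2, 3, 4, 5] (by decide)
      (by simp) (by simp) (by simp) (by simp))) ?_
  refine wins_step s(v 0, v 4) (by simp [hv.eq_iff]) (by simp [hv.eq_iff])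
    (by simp [hv.eq_iff]) ?_ ?_
  · refine wins_step s(v 0, v 2) (by simp [hv.eq_iff]) (by simp [hv.eq_iff]) (by simp [hv.eq_iff])
      (wins_of_red (hasCopy_cycle v hv _ ![0, 2, 3, 4] (by decide)
        (by simp) (by simp) (by simp) (by simp))) ?_
    refine wins_step s(v 1, v 3) (by simp [hv.eq_iff]) (by simp [hv.eq_iff]) (by simp [hv.eq_iff])
      (wins_of_red (hasCopy_cycle v hv _ ![0, 1, 3, 4] (by decide)
        (by simp) (by simp) (by simp) (by simp))) ?_
    exact wins_of_blue (hasCopy_path v hv _ ![4, 1, 3, 0, 2, 5] (by decide)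
      (by simp) (by simp) (by simp) (by simp) (by simp))
  · refine wins_step s(v 1, v 5) (by simp [hv.eq_iff]) (by simp [hv.eq_iff])
      (by simp [hv.eq_iff]) ?_ ?_
    · refine wins_step s(v 3, v 5) (by simp [hv.eq_iff]) (by simp [hv.eq_iff])
        (by simp [hv.eq_iff])
        (wins_of_red (hasCopy_cycle v hv _ ![1, 2, 3, 5] (by decide)
          (by simp) (by simp) (by simp) (by simp))) ?_
      exact wins_of_blue (hasCopy_path v hv _ ![1, 4, 0, 3, 5, 2] (by decide)
        (by simp) (by simp) (by simp) (by simp) (by simp))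
    · exact wins_of_blue (hasCopy_path v hv _ ![3, 0, 4, 1, 5, 2] (by decide)
        (by simp) (by simp) (by simp) (by simp) (by simp))
end

section
/- In the online Ramsey game with targets red C₄ and blue P₆, consider the position in which the five edges v₁v₂, v₂v₃, v₃v₄, v₄v₅, v₅v₆ of a path on six distinct vertices have been colored red, red, red, red, blue respectively (case R1). From this position Builder can force a red copy of C₄ or a blue copy of P₆ within at most 6 additional rounds, so within at most 11 rounds in total. -/
open SimpleGraph

/-- A red four-cycle on the vertices `w a, w b, w c, w d` ends the game. -/
theorem win_red {w : Fin 7 → ℕ} (hw : Function.Injective w) {R B : Set (Sym2 ℕ)} {r : ℕ}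
    (a b c d : Fin 7) (hd : Function.Injective ![a, b, c, d])
    (h1 : s(w a, w b) ∈ R) (h2 : s(w b, w c) ∈ R) (h3 : s(w c, w d) ∈ R)
    (h4 : s(w d, w a) ∈ R) :
    BuilderWinsIn (cycleGraph 4) (pathGraph 6) R B r := by
  have h : HasCopy (cycleGraph 4) R := by
    refine ⟨w ∘ ![a, b, c, d], hw.comp hd, ?_⟩
    intro i j hij
    rw [cycleGraph_adj] at hij
    fin_cases i <;> fin_cases j <;> first
      | exact absurd hij (by decide)
      | exact h1
      | exact h2
      | exact h3
      | exact h4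
      | (rw [Sym2.eq_swap]; first | exact h1 | exact h2 | exact h3 | exact h4)
  cases r <;> exact Or.inl h

/-- A blue path on the vertices `w a, ..., w f` ends the game. -/
theorem win_blue {w : Fin 7 → ℕ} (hw : Function.Injective w) {R B : Set (Sym2 ℕ)} {r : ℕ}
    (a b c d e f : Fin 7) (hd : Function.Injective ![a, b, c, d, e, f])
    (h1 : s(w a, w b) ∈ B) (h2 : s(w b, w c) ∈ B) (h3 : s(w c, w d) ∈ B)
    (h4 : s(w d, w e) ∈ B) (h5 : s(w e, w f) ∈ B) :
    BuilderWinsIn (cycleGraph 4) (pathGraph 6) R B r := by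
  have h : HasCopy (pathGraph 6) B := by
    refine ⟨w ∘ ![a, b, c, d, e, f], hw.comp hd, ?_⟩
    intro i j hij
    rw [pathGraph_adj] at hij
    fin_cases i <;> fin_cases j <;> first
      | exact absurd hij (by decide)
      | exact h1
      | exact h2
      | exact h3
      | exact h4
      | exact h5
      | (rw [Sym2.eq_swap]; first | exact h1 | exact h2 | exact h3 | exact h4 | exact h5)
  cases r
  · exact Or.inr h
  · exact Or.inr (Or.inl h)

theorem win_move {R B : Set (Sym2 ℕ)} {r : ℕ} (e : Sym2 ℕ) (h1 : ¬ e.IsDiag) (h2 : e ∉ R)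
    (h3 : e ∉ B) (h4 : BuilderWinsIn (cycleGraph 4) (pathGraph 6) (insert e R) B r)
    (h5 : BuilderWinsIn (cycleGraph 4) (pathGraph 6) R (insert e B) r) :
    BuilderWinsIn (cycleGraph 4) (pathGraph 6) R B (r + 1) :=
  Or.inr (Or.inr ⟨e, h1, h2, h3, h4, h5⟩)

/-- Builder's explicit strategy, using one fresh vertex `w 6`. -/
theorem builder_strategy (w : Fin 7 → ℕ) (hw : Function.Injective w) :
    BuilderWinsIn (cycleGraph 4) (pathGraph 6)
      {s(w 0, w 1), s(w 1, w 2), s(w 2, w 3), s(w 3, w 4)}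
      {s(w 4, w 5)} 6 := by
  refine win_move s(w 0, w 3) (by simp [hw.eq_iff]) (by simp [hw.eq_iff]) (by simp [hw.eq_iff]) ?_ ?_
  · exact win_red hw 0 1 2 3 (by decide) (by simp) (by simp) (by simp) (by simp)
  · refine win_move s(w 1, w 4) (by simp [hw.eq_iff]) (by simp [hw.eq_iff]) (by simp [hw.eq_iff]) ?_ ?_
    · exact win_red hw 1 2 3 4 (by decide) (by simp) (by simp) (by simp) (by simp)
    · refine win_move s(w 0, w 2) (by simp [hw.eq_iff]) (by simp [hw.eq_iff]) (by simp [hw.eq_iff]) ?_ ?_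
      · refine win_move s(w 1, w 3) (by simp [hw.eq_iff]) (by simp [hw.eq_iff]) (by simp [hw.eq_iff]) ?_ ?_
        · exact win_red hw 0 1 3 2 (by decide) (by simp) (by simp) (by simp) (by simp)
        · refine win_move s(w 1, w 6) (by simp [hw.eq_iff]) (by simp [hw.eq_iff]) (by simp [hw.eq_iff]) ?_ ?_
          · refine win_move s(w 0, w 6) (by simp [hw.eq_iff]) (by simp [hw.eq_iff]) (by simp [hw.eq_iff]) ?_ ?_
            · exact win_red hw 0 2 1 6 (by decide) (by simp) (by simp) (by simp) (by simp)
            · exact win_blue hw 5 4 1 3 0 6 (by decide) (by simp) (by simp) (by simp) (by simp) (by simp)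
          · refine win_move s(w 0, w 4) (by simp [hw.eq_iff]) (by simp [hw.eq_iff]) (by simp [hw.eq_iff]) ?_ ?_
            · exact win_red hw 0 2 3 4 (by decide) (by simp) (by simp) (by simp) (by simp)
            · exact win_blue hw 5 4 0 3 1 6 (by decide) (by simp) (by simp) (by simp) (by simp) (by simp)
      · refine win_move s(w 1, w 3) (by simp [hw.eq_iff]) (by simp [hw.eq_iff]) (by simp [hw.eq_iff]) ?_ ?_
        · refine win_move s(w 2, w 5) (by simp [hw.eq_iff]) (by simp [hw.eq_iff]) (by simp [hw.eq_iff]) ?_ ?_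
          · refine win_move s(w 3, w 5) (by simp [hw.eq_iff]) (by simp [hw.eq_iff]) (by simp [hw.eq_iff]) ?_ ?_
            · exact win_red hw 1 2 5 3 (by decide) (by simp) (by simp) (by simp) (by simp)
            · exact win_blue hw 1 4 5 3 0 2 (by decide) (by simp) (by simp) (by simp) (by simp) (by simp)
          · exact win_blue hw 1 4 5 2 0 3 (by decide) (by simp) (by simp) (by simp) (by simp) (by simp)
        · exact win_blue hw 2 0 3 1 4 5 (by decide) (by simp) (by simp) (by simp) (by simp) (by simp)

/-- Case `R1`: in the online Ramsey game with targets red `C₄` and blue `P₆`,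
from the position in which the five edges `v₁v₂, v₂v₃, v₃v₄, v₄v₅, v₅v₆` of a path on
six distinct vertices have been colored red, red, red, red, blue respectively,
Builder can force a red copy of `C₄` or a blue copy of `P₆` within at most 6 additional
rounds (so within at most 11 rounds in total). -/
theorem builder_wins_case_R1 (v : Fin 6 → ℕ) (hv : Function.Injective v) :
    BuilderWinsIn (cycleGraph 4) (pathGraph 6)
      {s(v 0, v 1), s(v 1, v 2), s(v 2, v 3), s(v 3, v 4)}
      {s(v 4, v 5)} 6 := by
  obtain ⟨x, hx⟩ := Infinite.exists_notMem_finset (Finset.univ.image v)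
  have hx' : x ∉ Set.range v := by simpa using hx
  have hw : Function.Injective (Fin.snoc v x : Fin 7 → ℕ) :=
    Fin.snoc_injective_iff.2 ⟨hv, hx'⟩
  exact builder_strategy (Fin.snoc v x : Fin 7 → ℕ) hw
end
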